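/- arXiv:2404.02005 — 2 statements merged into one kernel-verified Lean document; each statement's English description precedes it below -/
import Mathlib

section
/- Let (R, m) be an analytically unramified Noetherian local ring satisfying Serre's condition (S2), i.e. depth(R_p) ≥ min{2, height(p)} for every prime ideal p. Then the integral closure R̄ of R in its total ring of fractions is a reflexive R-module, i.e. the natural biduality map R̄ → Hom_R(Hom_R(R̄, R), R) is an isomorphism. -/
open CategoryTheory IsLocalRing

set_option synthInstance.maxHeartbeats 1000000
set_option maxHeartbeats 1000000

noncomputable section

/-- The integral closure `R̄` of `R` in its total ring of fractions, viewed as a type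
(with its canonical `R`-algebra and `R`-module structures). -/
abbrev IntClosure (R : Type) [CommRing R] : Type :=
  ↥(integralClosure R (FractionRing R))

/-- The quotient `R`-module `R̄/R`. -/
abbrev IntClosureQuot (R : Type) [CommRing R] : Type :=
  IntClosure R ⧸ LinearMap.range (Algebra.linearMap R (IntClosure R))

/-- The conductor ideal `𝔠 = Ann_R(R̄/R) = {r : R | r • R̄ ⊆ R}`. -/
def conductorIdeal (R : Type) [CommRing R] : Ideal R :=
  Module.annihilator R (IntClosureQuot R)

/-- A local ring `R` is analytically unramified if its `m`-adic completion is reduced. -/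
def AnalyticallyUnramified (R : Type) [CommRing R] [IsLocalRing R] : Prop :=
  IsReduced (AdicCompletion (maximalIdeal R) R)

/-- `R` is normal: it is reduced and equal to its integral closure `R̄` in its total
ring of fractions. -/
def IsNormalRing (R : Type) [CommRing R] : Prop :=
  IsReduced R ∧ integralClosure R (FractionRing R) = ⊥

/-- `Ext^i_R(M, N)` as a type. -/
abbrev ExtMod (R : Type) [CommRing R] (M : Type) [AddCommGroup M] [Module R M]
    (N : Type) [AddCommGroup N] [Module R N] (i : ℕ) : Type :=
  ↥(((Ext R (ModuleCat.{0} R) i).obj (Opposite.op (ModuleCat.of R M))).obj (ModuleCat.of R N))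

/-- `M` has finite projective dimension over `R`:
`Ext^i_R(M, -)` vanishes for all `i` bigger than some `n`. -/
def HasFiniteProjDim (R : Type) [CommRing R] (M : Type) [AddCommGroup M] [Module R M] : Prop :=
  ∃ n : ℕ, ∀ (N : ModuleCat.{0} R) (i : ℕ), n < i →
    Subsingleton ↥(((Ext R (ModuleCat.{0} R) i).obj (Opposite.op (ModuleCat.of R M))).obj N)

/-- `M` has finite injective dimension over `R`:
`Ext^i_R(-, M)` vanishes for all `i` bigger than some `n`. -/
def HasFiniteInjDim (R : Type) [CommRing R] (M : Type) [AddCommGroup M] [Module R M] : Prop :=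
  ∃ n : ℕ, ∀ (N : ModuleCat.{0} R) (i : ℕ), n < i →
    Subsingleton ↥(((Ext R (ModuleCat.{0} R) i).obj (Opposite.op N)).obj (ModuleCat.of R M))

/-- The depth of an `R`-module `M` over a local ring `(R, m)`: the least `i` such that
`Ext^i_R(R/m, M) ≠ 0` (`⊤` if there is no such `i`), valued in `WithBot (WithTop ℕ)`
for easy comparison with `ringKrullDim`. -/
def moduleDepth (R : Type) [CommRing R] [IsLocalRing R]
    (M : Type) [AddCommGroup M] [Module R M] : WithBot (WithTop ℕ) :=
  sInf { n : WithBot (WithTop ℕ) |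
    ∃ i : ℕ, n = (i : ℕ) ∧ Nontrivial (ExtMod R (ResidueField R) M i) }

/-- A Noetherian local ring is Gorenstein if it has finite injective dimension
as a module over itself. -/
def IsGorensteinLocal (R : Type) [CommRing R] [IsLocalRing R] : Prop :=
  IsNoetherianRing R ∧ HasFiniteInjDim R R

/-- A Noetherian local ring is Cohen–Macaulay if its depth equals its Krull dimension. -/
def IsCohenMacaulayLocal (R : Type) [CommRing R] [IsLocalRing R] : Prop :=
  IsNoetherianRing R ∧ moduleDepth R R = ringKrullDim R

/-- A ring is Cohen–Macaulay if it is Noetherian and all its localizations at primes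
are Cohen–Macaulay local rings. -/
def IsCohenMacaulayRing (A : Type) [CommRing A] : Prop :=
  IsNoetherianRing A ∧ ∀ (p : Ideal A) [p.IsPrime],
    moduleDepth (Localization.AtPrime p) (Localization.AtPrime p) =
      ringKrullDim (Localization.AtPrime p)

/-- Serre's condition `(S2)`: `depth (R_p) ≥ min {2, height p}` for every prime `p`
(`height p` being the dimension of `R_p`). -/
def SerreS2 (R : Type) [CommRing R] : Prop :=
  ∀ (p : Ideal R) [p.IsPrime],
    min 2 (ringKrullDim (Localization.AtPrime p)) ≤
      moduleDepth (Localization.AtPrime p) (Localization.AtPrime p)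

/-- A Noetherian local ring is regular if its maximal ideal can be generated by
`dim R` elements. -/
def IsRegularLocal (A : Type) [CommRing A] [IsLocalRing A] : Prop :=
  IsNoetherianRing A ∧ ∃ s : Finset A, Ideal.span (s : Set A) = maximalIdeal A ∧
    (s.card : WithBot (WithTop ℕ)) = ringKrullDim A

/-- Serre's condition `(R1)`: `R_p` is regular for every prime `p` of height at most `1`. -/
def SerreR1 (R : Type) [CommRing R] : Prop :=
  ∀ (p : Ideal R) [p.IsPrime], ringKrullDim (Localization.AtPrime p) ≤ 1 →
    IsRegularLocal (Localization.AtPrime p)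

/-- The `i`-th local cohomology `H^i_m(M)` of `M` with support in the maximal ideal,
as a type. -/
abbrev localCohMod (R : Type) [CommRing R] [IsLocalRing R] (i : ℕ)
    (M : Type) [AddCommGroup M] [Module R M] : Type :=
  ↥((localCohomology (maximalIdeal R) i).obj (ModuleCat.of R M))

/-- `x : Fin d → R` is a system of parameters for the local ring `(R, m)`:
`d = dim R`, all `x i` lie in `m`, and the ideal they generate is `m`-primary
(its radical is `m`). -/
def IsSystemOfParameters (R : Type) [CommRing R] [IsLocalRing R] {d : ℕ}
    (x : Fin d → R) : Prop :=
  (d : WithBot (WithTop ℕ)) = ringKrullDim R ∧ (∀ i, x i ∈ maximalIdeal R) ∧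
    (Ideal.span (Set.range x)).radical = maximalIdeal R

/-- `E` is an injective hull of the residue field of the local ring `R`:
`E` is injective and contains a copy of `R/m` as an essential submodule. -/
def IsInjectiveHullOfResidueField (R : Type) [CommRing R] [IsLocalRing R]
    (E : Type) [AddCommGroup E] [Module R E] : Prop :=
  Module.Injective R E ∧ ∃ f : ResidueField R →ₗ[R] E, Function.Injective f ∧
    ∀ N : Submodule R E, N ≠ ⊥ → N ⊓ LinearMap.range f ≠ ⊥

/-!
Let `R̄` be the integral closure of `R` in its total ring of fractions `Q`.

*Finiteness of `R̄`.* The completion `A` of `R` is reduced, so it embeds into the product of the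
fraction fields of the complete local domains `A ⧸ P`, where `P` runs through the minimal primes.
By Cohen, such a domain is finite over a power series ring `C⟦X₁, …, Xₙ⟧` over a coefficient ring,
and this ring is normal. Its integral closure in a finite extension of its fraction field is finite:
in characteristic zero by means of the trace form, in characteristic `p` by Tate's theorem on
complete normal domains, applied to the variables one after the other. Hence the integral closure
of `A` in the product is finite over `A`, and faithful flatness of `R → A` brings this down to `R`.

*Reflexivity.* A functional on `R̄` is multiplication by a fraction, so that the dual of `R̄` is the
conductor `𝔠 = {r | r R̄ ⊆ R}`. Likewise a functional on `𝔠` is multiplication by some `q ∈ Q`. As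
`𝔠` is an ideal of `R̄`, we get `q 𝔠 ⊆ 𝔠`, and so `q` is integral over `R`, i.e. `q ∈ R̄`.
-/

/-! ### Complete rings and modules -/

section Complete

variable {S : Type*} [CommRing S] (I : Ideal S)

theorem exists_mvPowerSeries_ringHom {C σ : Type*} [CommRing C] [Finite σ] [IsAdicComplete I S]
    (φ : C →+* S) (x : σ → S) (hx : ∀ i, x i ∈ I) :
    ∃ f : MvPowerSeries σ C →+* S, (∀ c, f (MvPowerSeries.C c) = φ c) ∧
      ∀ i, f (MvPowerSeries.X i) = x i := by
  let : WithIdeal S := ⟨I⟩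
  let : UniformSpace C := ⊥
  have : DiscreteUniformity C := ⟨rfl⟩
  have hI : IsAdic I := rfl
  obtain ⟨_, _⟩ := hI.isAdicComplete_iff.mp inferInstance
  have hφ : Continuous φ := continuous_of_discreteTopology
  have hx' : MvPowerSeries.HasEval x := by
    refine ⟨fun s => ?_, by simp [Filter.cofinite_eq_bot]⟩
    rw [IsTopologicallyNilpotent, hI.hasBasis_nhds_zero.tendsto_right_iff]
    intro i _
    filter_upwards [Filter.eventually_ge_atTop i] with n hn
    exact Ideal.pow_le_pow_right hn (Ideal.pow_mem_pow (hx s) n)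
  refine ⟨MvPowerSeries.eval₂Hom hφ hx', fun c => ?_, fun i => ?_⟩
  · rw [MvPowerSeries.coe_eval₂Hom, MvPowerSeries.eval₂_C]
  · rw [MvPowerSeries.coe_eval₂Hom, MvPowerSeries.eval₂_X]

theorem isPrecomplete_pi {ι : Type*} [Finite ι] [IsPrecomplete I S] :
    IsPrecomplete I (ι → S) := by
  have := Fintype.ofFinite ι
  classical
  refine ⟨fun f hf => ?_⟩
  have hcoord (i : ι) : ∃ l : S, ∀ n, f n i ≡ l [SMOD (I ^ n • ⊤ : Submodule S S)] := by
    refine IsPrecomplete.prec' (fun n => f n i) fun {m n} hmn => ?_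
    refine ((hf hmn).map (LinearMap.proj i : (ι → S) →ₗ[S] S)).mono ?_
    rw [Submodule.map_smul'']
    exact Submodule.smul_mono le_rfl le_top
  choose l hl using hcoord
  refine ⟨l, fun n => SModEq.sub_mem.mpr ?_⟩
  rw [pi_eq_sum_univ' (f n - l)]
  refine Submodule.sum_mem _ fun i _ => Submodule.smul_mem_smul ?_ Submodule.mem_top
  simpa using SModEq.sub_mem.mp (hl i n)

theorem finite_of_finite_quotient_smul_top {M : Type*} [AddCommGroup M] [Module S M]
    [IsPrecomplete I S] [IsHausdorff I M] [Module.Finite S (M ⧸ (I • ⊤ : Submodule S M))] :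
    Module.Finite S M := by
  obtain ⟨k, v, hv⟩ := Module.Finite.exists_fin (R := S) (M := M ⧸ (I • ⊤ : Submodule S M))
  choose w hw using fun i => Submodule.mkQ_surjective _ (v i)
  have := isPrecomplete_pi I (ι := Fin k)
  refine Module.Finite.of_surjective (Fintype.linearCombination S w)
    (surjective_of_mkQ_comp_surjective (I := I) ?_)
  rw [← LinearMap.range_eq_top, LinearMap.range_comp, Fintype.range_linearCombination,
    Submodule.map_span, ← Set.range_comp, ← hv]
  exact congrArg (fun g => Submodule.span S (Set.range g)) (funext hw)

end Complete

theorem isNoetherianRing_adicCompletion_maximalIdeal (R : Type*) [CommRing R] [IsLocalRing R]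
    [IsNoetherianRing R] : IsNoetherianRing (AdicCompletion (maximalIdeal R) R) := by
  set A := AdicCompletion (maximalIdeal R) R
  obtain ⟨k, v, hv⟩ := Submodule.fg_iff_exists_fin_generating_family.mp
    (maximalIdeal R).fg_of_isNoetherianRing
  have hm : maximalIdeal A = Ideal.span (Set.range fun i => algebraMap R A (v i)) := by
    rw [AdicCompletion.maximalIdeal_eq_map, Set.range_comp' (algebraMap R A)]
    exact (congrArg _ hv.symm).trans (Ideal.map_span _ _)
  obtain ⟨f, hfC, hfX⟩ := exists_mvPowerSeries_ringHom (maximalIdeal A) (algebraMap R A)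
    (fun i => algebraMap R A (v i)) fun i => hm ▸ Ideal.subset_span ⟨i, rfl⟩
  have hmap : (Ideal.span (Set.range MvPowerSeries.X)).map f = maximalIdeal A := by
    rw [Ideal.map_span, ← Set.range_comp, hm]
    exact congrArg (fun g => Ideal.span (Set.range g)) (funext hfX)
  have : IsHausdorff ((Ideal.span (Set.range MvPowerSeries.X)).map f) A :=
    hmap ▸ inferInstance
  refine isNoetherianRing_of_surjective _ _ f
    (surjective_of_mk_map_comp_surjective (I := Ideal.span (Set.range MvPowerSeries.X)) f ?_)
  intro y
  obtain ⟨y, rfl⟩ := Ideal.Quotient.mk_surjective y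
  obtain ⟨z, hz⟩ := (AdicCompletion.residueField_map_bijective R).2 (residue A y)
  obtain ⟨r, rfl⟩ := residue_surjective z
  refine ⟨MvPowerSeries.C r, ?_⟩
  rw [RingHom.comp_apply, hfC, Ideal.Quotient.eq, hmap, ← Ideal.Quotient.eq]
  rwa [ResidueField.map_residue] at hz

/-! ### Normality of power series rings -/

section Normal

variable {A K : Type*} [CommRing A] [Field K] [Algebra A K] [IsFractionRing A K]
  {x c : A} {z : K}

theorem smul_pow_mem_range_of_mul (hx : Prime x)
    (h : ∀ n, (x * c) • z ^ n ∈ (algebraMap A K).range) (n : ℕ) :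
    c • z ^ n ∈ (algebraMap A K).range := by
  have hinj := IsFractionRing.injective A K
  have hx0 : algebraMap A K x ≠ 0 := (map_ne_zero_iff _ hinj).mpr hx.ne_zero
  obtain ⟨a, ha⟩ := h n
  obtain ⟨b, hb⟩ := h (n * 2)
  have hsq : a ^ 2 = x * (c * b) := hinj <| by
    simp only [map_mul, map_pow, ha, hb, Algebra.smul_def, pow_mul]; ring
  obtain ⟨d, rfl⟩ := hx.dvd_of_dvd_pow ⟨_, hsq⟩
  refine ⟨d, mul_left_cancel₀ hx0 ?_⟩
  rw [← map_mul, ha, Algebra.smul_def, Algebra.smul_def, map_mul, mul_assoc]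

theorem exists_not_dvd_smul_pow_mem_range [IsDomain A] [IsNoetherianRing A] (hx : Prime x)
    (hz : IsAlmostIntegral A z) :
    ∃ c : A, ¬ x ∣ c ∧ ∀ n, c • z ^ n ∈ (algebraMap A K).range := by
  obtain ⟨c₀, hc₀, hz⟩ := hz
  obtain ⟨k, c, hxc, rfl⟩ := WfDvdMonoid.max_power_factor (nonZeroDivisors.ne_zero hc₀)
    hx.irreducible
  refine ⟨c, hxc, ?_⟩
  clear hc₀
  induction k with
  | zero => simpa using hz
  | succ k ih =>
    refine ih (smul_pow_mem_range_of_mul hx fun n => ?_)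
    rw [← mul_assoc, ← pow_succ']
    exact hz n

theorem exists_smul_eq_mul_add_mul [IsNoetherianRing A] (hx : Prime x)
    [IsIntegrallyClosed (A ⧸ Ideal.span {x})] (hxc : ¬ x ∣ c)
    (hz : ∀ n, c • z ^ n ∈ (algebraMap A K).range) :
    ∃ a w : A, c • z = algebraMap A K (c * a + x * w) := by
  have := (Ideal.span_singleton_prime hx.ne_zero).mpr hx
  set q := Ideal.Quotient.mk (Ideal.span {x})
  let F := FractionRing (A ⧸ Ideal.span {x})
  have hqc : q c ≠ 0 := by rwa [Ne, Ideal.Quotient.eq_zero_iff_dvd]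
  have hqc' : algebraMap _ F (q c) ≠ 0 := (map_ne_zero_iff _ (IsFractionRing.injective _ F)).mpr hqc
  choose a ha using hz
  have hpow (n : ℕ) : c ^ n * a n = c * a 1 ^ n := IsFractionRing.injective A K <| by
    simp only [map_mul, map_pow, ha, Algebra.smul_def]; ring
  have halmost : IsAlmostIntegral (A ⧸ Ideal.span {x})
      (algebraMap _ F (q (a 1)) / algebraMap _ F (q c)) := by
    refine ⟨q c, mem_nonZeroDivisors_of_ne_zero hqc, fun n => ⟨q (a n), ?_⟩⟩
    rw [Algebra.smul_def, div_pow, mul_div_assoc', eq_div_iff (pow_ne_zero n hqc')]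
    simpa only [map_mul, map_pow, mul_comm] using congrArg (fun t => algebraMap _ F (q t)) (hpow n)
  obtain ⟨y, hy⟩ := IsIntegrallyClosed.isIntegral_iff.mp halmost.isIntegral
  obtain ⟨y, rfl⟩ := Ideal.Quotient.mk_surjective y
  rw [eq_div_iff hqc', ← map_mul, (IsFractionRing.injective _ F).eq_iff, ← map_mul,
    Ideal.Quotient.mk_eq_mk_iff_sub_mem, Ideal.mem_span_singleton'] at hy
  obtain ⟨w, hw⟩ := hy
  refine ⟨y, -w, ?_⟩
  rw [← pow_one z, ← ha 1]
  congr 1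
  linear_combination hw

/-- The point of the statement is that the denominator `c` is the same for `z` and `z'`. -/
theorem exists_eq_add_mul_smul_pow_mem_range [IsDomain A] [IsNoetherianRing A] (hx : Prime x)
    [IsIntegrallyClosed (A ⧸ Ideal.span {x})] (hxc : ¬ x ∣ c)
    (hz : ∀ n, c • z ^ n ∈ (algebraMap A K).range) :
    ∃ (a : A) (z' : K), z = algebraMap A K a + algebraMap A K x * z' ∧
      ∀ n, c • z' ^ n ∈ (algebraMap A K).range := by
  have hinj := IsFractionRing.injective A K
  have hx0 : algebraMap A K x ≠ 0 := (map_ne_zero_iff _ hinj).mpr hx.ne_zero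
  have hc0 : algebraMap A K c ≠ 0 :=
    (map_ne_zero_iff _ hinj).mpr fun h => hxc (h ▸ dvd_zero x)
  obtain ⟨a, w, haw⟩ := exists_smul_eq_mul_add_mul hx hxc hz
  have hz' :
      z = algebraMap A K a + algebraMap A K x * (algebraMap A K w / algebraMap A K c) := by
    rw [Algebra.smul_def, map_add, map_mul, map_mul] at haw
    field_simp
    linear_combination haw
  refine ⟨a, _, hz', fun n => ?_⟩
  obtain ⟨d, hd⟩ : c • (z - algebraMap A K a) ^ n ∈ (algebraMap A K).range := by
    rw [sub_eq_add_neg, add_pow, Finset.smul_sum]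
    refine sum_mem fun i _ => ?_
    rw [← smul_mul_assoc, ← smul_mul_assoc, ← map_neg]
    exact mul_mem (mul_mem (hz _) (pow_mem (RingHom.mem_range_self _ _) _)) (natCast_mem _ _)
  have hdvd : x ^ n ∣ c ^ n * d := by
    refine ⟨c * w ^ n, hinj ?_⟩
    rw [hz', add_sub_cancel_left, Algebra.smul_def] at hd
    simp only [map_mul, map_pow, hd, mul_pow, div_pow]
    field_simp
  obtain ⟨e, rfl⟩ := hx.pow_dvd_of_dvd_mul_left n (fun h => hxc (hx.dvd_of_dvd_pow h)) hdvd
  refine ⟨e, mul_left_cancel₀ (pow_ne_zero n hx0) ?_⟩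
  rw [← map_pow, ← map_mul, hd, hz', add_sub_cancel_left]
  simp only [Algebra.smul_def, map_pow]
  ring

theorem exists_smul_eq_mul_add_pow_mul [IsDomain A] [IsNoetherianRing A] (hx : Prime x)
    [IsIntegrallyClosed (A ⧸ Ideal.span {x})] (hxc : ¬ x ∣ c)
    (hz : ∀ n, c • z ^ n ∈ (algebraMap A K).range) (k : ℕ) :
    ∃ a w : A, c • z = algebraMap A K (c * a + x ^ k * w) := by
  induction k generalizing z with
  | zero =>
    obtain ⟨a, ha⟩ := hz 1
    exact ⟨0, a, by simpa using ha.symm⟩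
  | succ k ih =>
    obtain ⟨a, z', rfl, hz'⟩ := exists_eq_add_mul_smul_pow_mem_range hx hxc hz
    obtain ⟨a', w, hw⟩ := ih hz'
    refine ⟨a + x * a', w, ?_⟩
    rw [Algebra.smul_def] at hw
    simp only [Algebra.smul_def, map_add, map_mul, map_pow] at hw ⊢
    linear_combination algebraMap A K x * hw

theorem isIntegrallyClosed_of_quotient_span_singleton [IsDomain A] [IsNoetherianRing A]
    (hx : Prime x) (hxj : x ∈ (⊥ : Ideal A).jacobson) [IsIntegrallyClosed (A ⧸ Ideal.span {x})] :
    IsIntegrallyClosed A := by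
  rw [isIntegrallyClosed_iff (FractionRing A)]
  intro z hz
  obtain ⟨c, hxc, hc⟩ := exists_not_dvd_smul_pow_mem_range hx hz.isAlmostIntegral
  obtain ⟨a, ha⟩ := hc 1
  have hmem : a ∈ Ideal.span {c} := by
    have := IsHausdorff.of_le_jacobson (Ideal.span {x}) (A ⧸ Ideal.span {c})
      (by rwa [Ideal.span_singleton_le_iff_mem])
    rw [← Ideal.Quotient.eq_zero_iff_mem]
    refine IsHausdorff.haus this _ fun k => SModEq.zero.mpr ?_
    obtain ⟨b, w, hw⟩ := exists_smul_eq_mul_add_pow_mul hx hxc hc k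
    rw [← pow_one z, ← ha, (IsFractionRing.injective A (FractionRing A)).eq_iff] at hw
    have : Ideal.Quotient.mk (Ideal.span {c}) a = x ^ k • Ideal.Quotient.mk (Ideal.span {c}) w := by
      rw [Algebra.smul_def, Ideal.Quotient.algebraMap_eq, ← map_mul, hw, Ideal.Quotient.eq,
        add_sub_cancel_right]
      exact Ideal.mul_mem_right _ _ (Ideal.mem_span_singleton_self c)
    rw [this]
    exact Submodule.smul_mem_smul (Ideal.pow_mem_pow (Ideal.mem_span_singleton_self x) k)
      Submodule.mem_top
  obtain ⟨b, rfl⟩ := Ideal.mem_span_singleton'.mp hmem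
  have hc0 : algebraMap A (FractionRing A) c ≠ 0 :=
    (map_ne_zero_iff _ (IsFractionRing.injective _ _)).mpr fun h => hxc (h ▸ dvd_zero x)
  refine ⟨b, mul_left_cancel₀ hc0 ?_⟩
  rw [← map_mul, mul_comm c, ha, Algebra.smul_def, pow_one]

end Normal

/-- Evaluation at `X = 0`, as an isomorphism `D⟦X⟧ / (X) ≃ D`. -/
def powerSeriesQuotientXEquiv (D : Type*) [CommRing D] :
    (PowerSeries D ⧸ Ideal.span {(PowerSeries.X : PowerSeries D)}) ≃+* D :=
  (Ideal.quotEquivOfEq (Ideal.ext fun f => by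
    rw [RingHom.mem_ker, Ideal.mem_span_singleton, PowerSeries.X_dvd_iff])).trans
    (RingHom.quotientKerEquivOfSurjective (PowerSeries.constantCoeff_surj (R := D)))

instance isIntegrallyClosed_powerSeries (D : Type*) [CommRing D] [IsDomain D] [IsNoetherianRing D]
    [IsIntegrallyClosed D] : IsIntegrallyClosed (PowerSeries D) := by
  have : IsIntegrallyClosed (PowerSeries D ⧸ Ideal.span {(PowerSeries.X : PowerSeries D)}) :=
    .of_equiv (powerSeriesQuotientXEquiv D).symm
  exact isIntegrallyClosed_of_quotient_span_singleton PowerSeries.X_prime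
    (IsAdicComplete.le_jacobson_bot (Ideal.span {PowerSeries.X}) (Ideal.mem_span_singleton_self _))

instance isDomain_mvPowerSeries (D σ : Type*) [CommRing D] [IsDomain D] :
    IsDomain (MvPowerSeries σ D) := NoZeroDivisors.to_isDomain _

instance isIntegrallyClosed_mvPowerSeries (D : Type*) [CommRing D] [IsDomain D] [IsNoetherianRing D]
    [IsIntegrallyClosed D] (n : ℕ) : IsIntegrallyClosed (MvPowerSeries (Fin n) D) := by
  induction n with
  | zero =>
    exact .of_equiv (MvPowerSeries.isEmptyEquiv (Fin 0) D).symm.toRingEquiv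
  | succ n ih => exact .of_equiv (MvPowerSeries.finSuccEquiv D n).symm.toRingEquiv

/-! ### Finiteness of integral closures -/

universe u

/-- A domain `D` is *N-2* if its integral closure in every finite extension of its fraction field
is a finite `D`-module. -/
def IsN2 (D : Type u) [CommRing D] : Prop :=
  ∀ (K L : Type u) [Field K] [Field L] [Algebra D K] [IsFractionRing D K] [Algebra K L]
    [Algebra D L] [IsScalarTower D K L] [FiniteDimensional K L],
    Module.Finite D (integralClosure D L)

section Transfer

variable {A L N : Type*} [CommRing A]

theorem finite_integralClosure_of_algHom_injective [IsNoetherianRing A] [CommRing L] [Algebra A L]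
    [CommRing N] [Algebra A N] [Module.Finite A (integralClosure A N)] (f : L →ₐ[A] N)
    (hf : Function.Injective f) : Module.Finite A (integralClosure A L) :=
  Module.Finite.of_injective f.mapIntegralClosure.toLinearMap fun _ _ h =>
    Subtype.ext (hf (congrArg Subtype.val h))

variable (A) in
theorem finite_integralClosure_of_finite_tower [IsNoetherianRing A] (B : Type*) [CommRing B]
    [Algebra A B] [Module.Finite A B] [CommRing N] [Algebra A N] [Algebra B N] [IsScalarTower A B N]
    [Module.Finite B (integralClosure B N)] : Module.Finite A (integralClosure A N) := by
  have : Module.Finite A (integralClosure B N) := Module.Finite.trans B _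
  let inclusion : integralClosure A N →ₗ[A] integralClosure B N :=
    { toFun := fun x => ⟨x, x.2.tower_top⟩
      map_add' := fun _ _ => rfl
      map_smul' := fun _ _ => rfl }
  exact Module.Finite.of_injective inclusion fun _ _ h =>
    Subtype.ext (congrArg (Subtype.val : integralClosure B N → N) h)

variable (A) in
theorem finite_integralClosure_of_isIntegral_tower (B : Type*) [CommRing B] [Algebra A B]
    [Algebra.IsIntegral A B] [CommRing N] [Algebra A N] [Algebra B N] [IsScalarTower A B N]
    [Module.Finite A (integralClosure A N)] : Module.Finite B (integralClosure B N) := by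
  let inclusion : integralClosure A N →ₗ[A] integralClosure B N :=
    { toFun := fun x => ⟨x, x.2.tower_top⟩
      map_add' := fun _ _ => rfl
      map_smul' := fun _ _ => rfl }
  have : Module.Finite A (integralClosure B N) :=
    Module.Finite.of_surjective inclusion fun x => ⟨⟨x, isIntegral_trans _ x.2⟩, rfl⟩
  exact Module.Finite.of_restrictScalars_finite A B _

end Transfer

theorem IsN2.of_finite {S A : Type u} [CommRing S] [IsDomain S] [CommRing A] [IsDomain A]
    [Algebra S A] [FaithfulSMul S A] [Module.Finite S A] (hS : IsN2 S) : IsN2 A := by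
  intro K L _ _ _ _ _ _ _ _
  let algSK : Algebra S K := ((algebraMap A K).comp (algebraMap S A)).toAlgebra
  let algSL : Algebra S L := ((algebraMap A L).comp (algebraMap S A)).toAlgebra
  have : IsScalarTower S A K := IsScalarTower.of_algebraMap_eq fun _ => rfl
  have : IsScalarTower S A L := IsScalarTower.of_algebraMap_eq fun _ => rfl
  have : IsScalarTower S K L := IsScalarTower.of_algebraMap_eq fun s =>
    IsScalarTower.algebraMap_apply A K L (algebraMap S A s)
  have : FaithfulSMul S K := (faithfulSMul_iff_algebraMap_injective S K).mpr
    ((IsFractionRing.injective A K).comp (FaithfulSMul.algebraMap_injective S A))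
  let _ := FractionRing.liftAlgebra S K
  let _ : Algebra (FractionRing S) L :=
    ((algebraMap K L).comp (algebraMap (FractionRing S) K)).toAlgebra
  have : IsScalarTower (FractionRing S) K L := IsScalarTower.of_algebraMap_eq fun _ => rfl
  have : IsScalarTower S (FractionRing S) L := IsScalarTower.to₁₂₄ S (FractionRing S) K L
  have : FiniteDimensional (FractionRing S) K :=
    Module.Finite.of_isLocalization S A (nonZeroDivisors S)
  have : FiniteDimensional (FractionRing S) L := Module.Finite.trans K L
  have := hS (FractionRing S) L
  exact finite_integralClosure_of_isIntegral_tower S A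

theorem IsN2.of_ringEquiv {D D' : Type u} [CommRing D] [IsDomain D] [CommRing D'] [IsDomain D']
    (e : D ≃+* D') (hD : IsN2 D) : IsN2 D' := by
  let _ : Algebra D D' := e.toRingHom.toAlgebra
  have : FaithfulSMul D D' := (faithfulSMul_iff_algebraMap_injective D D').mpr e.injective
  have : Module.Finite D D' := Module.Finite.of_surjective (Algebra.linearMap D D') e.surjective
  exact hD.of_finite

theorem isN2_field (k : Type u) [Field k] : IsN2 k := by
  intro K L _ _ _ _ _ _ _ _
  have : Module.Finite k K := Module.Finite.of_surjective (Algebra.linearMap k K)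
    (IsFractionRing.surjective_iff_isField.mpr (Field.toIsField k))
  have : Module.Finite k L := Module.Finite.trans K L
  infer_instance

section PurelyInseparable

theorem isPurelyInseparable_fixedField_top (K N : Type*) [Field K] [Field N] [Algebra K N]
    [Normal K N] :
    IsPurelyInseparable K (IntermediateField.fixedField (⊤ : Subgroup (N ≃ₐ[K] N))) := by
  classical
  refine (isPurelyInseparable_iff_natSepDegree_eq_one K).mpr fun x => ?_
  have eq_of_mem_aroots (y : N) (hy : y ∈ (minpoly K (x : N)).aroots N) : y = x := by
    have minpoly_eq : minpoly K (x : N) = minpoly K y := minpoly.eq_of_irreducible_of_monic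
      (minpoly.irreducible (Algebra.IsIntegral.isIntegral _)) (Polynomial.mem_aroots.mp hy).2
      (minpoly.monic (Algebra.IsIntegral.isIntegral _))
    obtain ⟨σ, hσ⟩ := (Normal.minpoly_eq_iff_mem_orbit N).mp minpoly_eq.symm
    exact hσ.symm.trans ((IntermediateField.mem_fixedField_iff _ _).mp x.2 σ trivial)
  have x_mem_aroots : (x : N) ∈ (minpoly K (x : N)).aroots N := Polynomial.mem_aroots.mpr
    ⟨minpoly.ne_zero (Algebra.IsIntegral.isIntegral _), minpoly.aeval K _⟩
  rw [IntermediateField.minpoly_eq x,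
    Polynomial.natSepDegree_eq_of_splits _ (Normal.splits ‹Normal K N› _), Finset.card_eq_one]
  exact ⟨x, Finset.eq_singleton_iff_unique_mem.mpr ⟨Multiset.mem_toFinset.mpr x_mem_aroots,
    fun y hy => eq_of_mem_aroots y (Multiset.mem_toFinset.mp hy)⟩⟩

variable {A : Type u} [CommRing A] [IsDomain A] [IsNoetherianRing A]

theorem isN2_of_charZero [IsIntegrallyClosed A] [CharZero A] : IsN2 A := by
  intro K L _ _ _ _ _ _ _ _
  have : CharZero K := charZero_of_injective_algebraMap (IsFractionRing.injective A K)
  exact IsIntegralClosure.finite A K L _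

/-- A normal extension is separable over the fixed field of its automorphism group, which is purely
inseparable over the base. -/
theorem isN2_of_isPurelyInseparable
    (h : ∀ (K L : Type u) [Field K] [Field L] [Algebra A K] [IsFractionRing A K] [Algebra K L]
      [Algebra A L] [IsScalarTower A K L] [FiniteDimensional K L] [IsPurelyInseparable K L],
      Module.Finite A (integralClosure A L)) : IsN2 A := by
  intro K L _ _ _ _ _ _ _ _
  let N := IntermediateField.normalClosure K L (AlgebraicClosure L)
  let K' := IntermediateField.fixedField (⊤ : Subgroup (N ≃ₐ[K] N))
  have : IsPurelyInseparable K K' := isPurelyInseparable_fixedField_top K N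
  have : IsGalois K' N := IsGalois.of_fixed_field N (⊤ : Subgroup (N ≃ₐ[K] N))
  let B := integralClosure A K'
  have : Module.Finite A B := h K K'
  have : IsFractionRing B K' := integralClosure.isFractionRing_of_finite_extension K K'
  have : IsIntegrallyClosed B := integralClosure.isIntegrallyClosedOfFiniteExtension K
  have : IsNoetherianRing B := IsNoetherianRing.of_finite A B
  have : Module.Finite B (integralClosure B N) := IsIntegralClosure.finite B K' N _
  have : IsScalarTower A B N := IsScalarTower.of_algebraMap_eq fun _ => rfl
  have : Module.Finite A (integralClosure A N) := finite_integralClosure_of_finite_tower A B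
  exact finite_integralClosure_of_algHom_injective
    ((IsScalarTower.toAlgHom K L N).restrictScalars A) (algebraMap L N).injective

end PurelyInseparable

/-! ### Tate's theorem on purely inseparable extensions -/

theorem eq_zero_of_forall_pow_dvd {A : Type*} [CommRing A] {x : A} [IsHausdorff (Ideal.span {x}) A]
    {a : A} (h : ∀ n, x ^ n ∣ a) : a = 0 := by
  refine IsHausdorff.haus' (I := Ideal.span {x}) a fun n => SModEq.zero.mpr ?_
  rw [Ideal.span_singleton_pow, smul_eq_mul, Ideal.mul_top]
  exact Ideal.mem_span_singleton.mpr (h n)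

theorem linearIndependent_of_quotient_span_singleton {A M N ι : Type*} [CommRing A]
    [AddCommGroup M] [Module A M] {x : A} [IsHausdorff (Ideal.span {x}) A] [AddCommGroup N]
    [Module A N] [Module (A ⧸ Ideal.span {x}) N] [IsScalarTower A (A ⧸ Ideal.span {x}) N]
    (hx : IsSMulRegular M x) (f : M →ₗ[A] N) {v : ι → M}
    (hv : LinearIndependent (A ⧸ Ideal.span {x}) (f ∘ v)) : LinearIndependent A v := by
  rw [linearIndependent_iff'] at hv ⊢
  intro s a ha i hi
  have dvd_of_sum_eq_zero (b : ι → A) (hb : ∑ j ∈ s, b j • v j = 0) (j) (hj : j ∈ s) : x ∣ b j := by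
    rw [← Ideal.Quotient.eq_zero_iff_dvd]
    refine hv s (fun j => Ideal.Quotient.mk _ (b j)) ?_ j hj
    have := congrArg f hb
    simpa only [map_sum, map_smul, map_zero, Function.comp_apply,
      ← Ideal.Quotient.algebraMap_eq, algebraMap_smul] using this
  refine eq_zero_of_forall_pow_dvd (x := x) fun n => ?_
  induction n generalizing a with
  | zero => simp
  | succ n ih =>
    choose! b hb using dvd_of_sum_eq_zero a ha
    have hb' : ∑ j ∈ s, b j • v j = 0 := by
      refine hx.right_eq_zero_of_smul ?_
      rw [Finset.smul_sum, ← ha]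
      exact Finset.sum_congr rfl fun j hj => by rw [hb j hj, mul_smul]
    rw [hb i hi, pow_succ']
    exact mul_dvd_mul_left x (ih b hb')

theorem rank_quotient_span_singleton_le {A : Type*} {M N : Type u} [CommRing A] [Nontrivial A]
    [AddCommGroup M] [Module A M] {x : A} [IsHausdorff (Ideal.span {x}) A]
    [AddCommGroup N] [Module A N] [Module (A ⧸ Ideal.span {x}) N]
    [IsScalarTower A (A ⧸ Ideal.span {x}) N]
    (hx : IsSMulRegular M x) (f : M →ₗ[A] N) (hf : Function.Surjective f) :
    Module.rank (A ⧸ Ideal.span {x}) N ≤ Module.rank A M := by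
  rw [Module.rank_def]
  refine ciSup_le' fun ⟨s, hs⟩ => ?_
  choose g hg using hf
  have : LinearIndependent A fun z : s => g z :=
    linearIndependent_of_quotient_span_singleton hx f (by simpa only [Function.comp_def, hg])
  exact this.cardinal_le_rank

section Roots

variable {A B : Type*} [CommRing A] [CommRing B] [IsDomain B]
  [Algebra A B] [FaithfulSMul A B] {q : ℕ} {x : A} {y : B}

theorem isHausdorff_span_singleton_of_pow_mem_range
    (hq : q ≠ 0) (hpow : ∀ b : B, b ^ q ∈ (algebraMap A B).range)
    [IsHausdorff (Ideal.span {x}) A] : IsHausdorff (Ideal.span {x}) B := by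
  refine ⟨fun b hb => ?_⟩
  obtain ⟨a, ha⟩ := hpow b
  suffices a = 0 by rwa [this, map_zero, eq_comm, pow_eq_zero_iff hq] at ha
  refine eq_zero_of_forall_pow_dvd (x := x) fun n => ?_
  have hbn := SModEq.zero.mp (hb n)
  rw [Ideal.span_singleton_pow, Submodule.ideal_span_singleton_smul] at hbn
  obtain ⟨c, -, hc : x ^ n • c = b⟩ := hbn
  obtain ⟨c', hc'⟩ := hpow c
  have : a = (x ^ n) ^ q * c' := FaithfulSMul.algebraMap_injective A B <| by
    rw [ha, ← hc, smul_pow, Algebra.smul_def, map_mul, hc']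
  exact this ▸ (dvd_pow_self _ hq).mul_right c'

variable [IsIntegrallyClosed B]

theorem dvd_iff_dvd_of_pow_eq (hq : q ≠ 0) (hpow : ∀ b : B, b ^ q ∈ (algebraMap A B).range)
    (hy : y ^ q = algebraMap A B x) {a : A} {b : B} (hab : b ^ q = algebraMap A B a) :
    y ∣ b ↔ x ∣ a := by
  refine ⟨?_, fun hxa => ?_⟩
  · rintro ⟨c, rfl⟩
    obtain ⟨c', hc⟩ := hpow c
    refine ⟨c', FaithfulSMul.algebraMap_injective A B ?_⟩
    rw [← hab, mul_pow, hy, ← hc, map_mul]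
  · rw [← IsIntegrallyClosed.pow_dvd_pow_iff hq, hy, hab]
    exact map_dvd _ hxa

theorem prime_of_pow_eq_prime (hq : q ≠ 0) (hpow : ∀ b : B, b ^ q ∈ (algebraMap A B).range)
    (hy : y ^ q = algebraMap A B x) (hx : Prime x) : Prime y := by
  refine ⟨?_, fun h => ?_, fun b c hbc => ?_⟩
  · rintro rfl
    rw [zero_pow hq, eq_comm, map_eq_zero_iff _ (FaithfulSMul.algebraMap_injective A B)] at hy
    exact hx.ne_zero hy
  · have := (dvd_iff_dvd_of_pow_eq hq hpow hy (a := 1) (b := 1) (by simp)).mp h.dvd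
    exact hx.not_isUnit (isUnit_of_dvd_one this)
  · obtain ⟨b', hb⟩ := hpow b
    obtain ⟨c', hc⟩ := hpow c
    have hmul : (b * c) ^ q = algebraMap A B (b' * c') := by rw [mul_pow, map_mul, hb, hc]
    rw [dvd_iff_dvd_of_pow_eq hq hpow hy hmul] at hbc
    rw [dvd_iff_dvd_of_pow_eq hq hpow hy hb.symm, dvd_iff_dvd_of_pow_eq hq hpow hy hc.symm]
    exact hx.dvd_or_dvd hbc

theorem span_singleton_liesOver_of_pow_eq_prime (hq : q ≠ 0)
    (hpow : ∀ b : B, b ^ q ∈ (algebraMap A B).range)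
    (hy : y ^ q = algebraMap A B x) (hx : Prime x) :
    (Ideal.span {y}).LiesOver (Ideal.span {x}) := by
  refine ⟨Ideal.ext fun a => ?_⟩
  rw [Ideal.mem_under, Ideal.mem_span_singleton, Ideal.mem_span_singleton,
    dvd_iff_dvd_of_pow_eq hq hpow hy (map_pow (algebraMap A B) a q).symm, hx.dvd_pow_iff_dvd hq]

end Roots

attribute [local instance] FractionRing.liftAlgebra in
theorem IsN2.finite_of_rank_lt_aleph0 {D E : Type u} [CommRing D] [IsDomain D] [IsNoetherianRing D]
    [CommRing E] [IsDomain E] [Algebra D E] [FaithfulSMul D E] [Algebra.IsIntegral D E]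
    (hD : IsN2 D) (hrank : Module.rank D E < Cardinal.aleph0) : Module.Finite D E := by
  have : FiniteDimensional (FractionRing D) (FractionRing E) := by
    rwa [FiniteDimensional, ← Module.rank_lt_aleph0_iff, Algebra.IsAlgebraic.rank_fractionRing]
  have := hD (FractionRing D) (FractionRing E)
  let toIntegralClosure : E →ₐ[D] integralClosure D (FractionRing E) :=
    (IsScalarTower.toAlgHom D E (FractionRing E)).codRestrict _ fun e =>
      (Algebra.IsIntegral.isIntegral e).algebraMap
  exact Module.Finite.of_injective toIntegralClosure.toLinearMap fun _ _ h =>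
    IsFractionRing.injective E (FractionRing E) (congrArg Subtype.val h)

theorem finite_quotient_span_singleton_pow {A B : Type*} [CommRing A] [CommRing B] [Algebra A B]
    {y : B} [Module.Finite A (B ⧸ Ideal.span {y})] (q : ℕ) :
    Module.Finite A (B ⧸ Ideal.span {y ^ q}) := by
  rcases eq_or_ne q 0 with rfl | hq
  · have : Subsingleton (B ⧸ Ideal.span {y ^ 0}) :=
      Ideal.Quotient.subsingleton_iff.mpr (by rw [pow_zero, Ideal.span_singleton_one])
    infer_instance
  have hle : Ideal.span {y ^ q} ≤ Ideal.span {y} :=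
    Ideal.span_singleton_le_span_singleton.mpr (dvd_pow_self y hq)
  have hker : RingHom.ker (Ideal.Quotient.factorₐ A hle) =
      Ideal.span {Ideal.Quotient.mk (Ideal.span {y ^ q}) y} :=
    (Ideal.Quotient.factor_ker hle).trans
      ((Ideal.map_span _ _).trans (congrArg _ Set.image_singleton))
  refine Module.finite_of_surjective_of_ker_le_nilradical (Ideal.Quotient.factorₐ A hle)
    (Ideal.Quotient.factor_surjective hle) ?_ (hker ▸ Submodule.fg_span_singleton _)
  rw [hker, Ideal.span_singleton_le_iff_mem, mem_nilradical]
  exact ⟨q, Ideal.Quotient.eq_zero_iff_mem.mpr (Ideal.mem_span_singleton_self _)⟩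

theorem finite_of_pow_mem_range {A B : Type u} [CommRing A] [IsDomain A] [IsNoetherianRing A]
    [CommRing B] [IsDomain B] [IsIntegrallyClosed B] [Algebra A B] [FaithfulSMul A B] {q : ℕ}
    (hq : q ≠ 0) (hpow : ∀ b : B, b ^ q ∈ (algebraMap A B).range)
    (hrank : Module.rank A B < Cardinal.aleph0) {x : A} (hx : Prime x)
    [IsAdicComplete (Ideal.span {x}) A] (hN2 : IsN2 (A ⧸ Ideal.span {x})) {y : B}
    (hy : y ^ q = algebraMap A B x) : Module.Finite A B := by
  have : Algebra.IsIntegral A B := ⟨fun b => by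
    obtain ⟨a, ha⟩ := hpow b
    exact IsIntegral.of_pow (Nat.pos_of_ne_zero hq) (ha ▸ isIntegral_algebraMap)⟩
  have := span_singleton_liesOver_of_pow_eq_prime hq hpow hy hx
  have : (Ideal.span {x}).IsPrime := (Ideal.span_singleton_prime hx.ne_zero).mpr hx
  have hyp := prime_of_pow_eq_prime hq hpow hy hx
  have : (Ideal.span {y}).IsPrime := (Ideal.span_singleton_prime hyp.ne_zero).mpr hyp
  have hreg : IsSMulRegular B x := smul_right_injective B hx.ne_zero
  have : Module.Finite (A ⧸ Ideal.span {x}) (B ⧸ Ideal.span {y}) := hN2.finite_of_rank_lt_aleph0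
    ((rank_quotient_span_singleton_le hreg (Ideal.Quotient.mkₐ A (Ideal.span {y})).toLinearMap
      Ideal.Quotient.mk_surjective).trans_lt hrank)
  have : Module.Finite A (B ⧸ Ideal.span {y}) := Module.Finite.trans (A ⧸ Ideal.span {x}) _
  have := finite_quotient_span_singleton_pow (A := A) (y := y) q
  have : Module.Finite A (B ⧸ (Ideal.span {x} • ⊤ : Submodule A B)) := by
    rw [Ideal.smul_top_eq_map, Ideal.map_span, Set.image_singleton, ← hy]
    exact Module.Finite.equiv (Submodule.Quotient.restrictScalarsEquiv A (Ideal.span {y ^ q})).symm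
  have := isHausdorff_span_singleton_of_pow_mem_range hq hpow (x := x)
  exact finite_of_finite_quotient_smul_top (Ideal.span {x})

theorem finite_integralClosure_of_pow_mem_range {A K L : Type u} [CommRing A] [IsDomain A]
    [IsNoetherianRing A] [IsIntegrallyClosed A] [Field K] [Field L] [Algebra A K]
    [IsFractionRing A K] [Algebra K L] [Algebra A L] [IsScalarTower A K L] [FiniteDimensional K L]
    {q : ℕ} (hq : q ≠ 0) (hpow : ∀ l : L, l ^ q ∈ (algebraMap K L).range) {x : A} (hx : Prime x)
    [IsAdicComplete (Ideal.span {x}) A] (hN2 : IsN2 (A ⧸ Ideal.span {x})) {y : L}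
    (hy : y ^ q = algebraMap A L x) : Module.Finite A (integralClosure A L) := by
  have : IsFractionRing (integralClosure A L) L :=
    integralClosure.isFractionRing_of_finite_extension K L
  have : IsIntegrallyClosed (integralClosure A L) :=
    integralClosure.isIntegrallyClosedOfFiniteExtension K
  have : FaithfulSMul A L := FaithfulSMul.trans A K L
  have hrank : Module.rank A (integralClosure A L) < Cardinal.aleph0 := by
    rw [← Algebra.IsAlgebraic.rank_of_isFractionRing A K (integralClosure A L) L]
    exact Module.rank_lt_aleph0 K L
  have hpowB (b : integralClosure A L) : b ^ q ∈ (algebraMap A (integralClosure A L)).range := by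
    obtain ⟨k, hk⟩ := hpow b
    have hkL : algebraMap K L k = (b : L) ^ q := hk
    have hkint : IsIntegral A k :=
      (isIntegral_algebraMap_iff (algebraMap K L).injective).mp (hkL ▸ b.2.pow q)
    obtain ⟨a, rfl⟩ := IsIntegrallyClosed.isIntegral_iff.mp hkint
    exact ⟨a, Subtype.ext ((IsScalarTower.algebraMap_apply A K L a).trans hkL)⟩
  have hyint : IsIntegral A y :=
    IsIntegral.of_pow (Nat.pos_of_ne_zero hq) (hy ▸ isIntegral_algebraMap)
  exact finite_of_pow_mem_range hq hpowB hrank hx hN2 (y := ⟨y, hyint⟩) (Subtype.ext hy)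

theorem exists_finiteDimensional_extension_pow_eq {K L : Type u} [Field K] [Field L] [Algebra K L]
    [FiniteDimensional K L] (p : ℕ) [ExpChar K p] (e : ℕ)
    (hL : ∀ l : L, l ^ p ^ e ∈ (algebraMap K L).range) (x : K) :
    ∃ (L' : Type u) (_ : Field L') (_ : Algebra K L') (_ : L →ₐ[K] L'), FiniteDimensional K L' ∧
      (∀ l : L', l ^ p ^ e ∈ (algebraMap K L').range) ∧
      ∃ y : L', y ^ p ^ e = algebraMap K L' x := by
  let Ω := AlgebraicClosure L
  have : ExpChar Ω p := expChar_of_injective_algebraMap (algebraMap K Ω).injective p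
  obtain ⟨y, hy⟩ := IsAlgClosed.exists_pow_nat_eq (algebraMap K Ω x) (expChar_pow_pos K p e)
  let L' := IntermediateField.adjoin L {y}
  have : FiniteDimensional L L' :=
    IntermediateField.adjoin.finiteDimensional (Algebra.IsIntegral.isIntegral y)
  have hL' : L'.toSubfield ≤ (algebraMap K Ω).fieldRange.comap (iterateFrobenius Ω p e) := by
    rw [IntermediateField.adjoin_toSubfield, Subfield.closure_le, Set.union_subset_iff]
    refine ⟨?_, Set.singleton_subset_iff.mpr ⟨x, hy.symm⟩⟩
    rintro - ⟨l, rfl⟩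
    obtain ⟨k, hk⟩ := hL l
    refine ⟨k, ?_⟩
    rw [IsScalarTower.algebraMap_apply K L Ω, hk, map_pow, iterateFrobenius_def]
  refine ⟨L', inferInstance, inferInstance, IsScalarTower.toAlgHom K L L', .trans K L L',
    fun l => ?_, ⟨y, IntermediateField.mem_adjoin_simple_self L y⟩, Subtype.ext hy⟩
  obtain ⟨k, hk⟩ := hL' l.2
  exact ⟨k, Subtype.ext hk⟩

theorem IsN2.of_quotient_span_singleton {A : Type u} [CommRing A] [IsDomain A] [IsNoetherianRing A]
    [IsIntegrallyClosed A] (p : ℕ) [Fact p.Prime] [CharP A p] {x : A} (hx : Prime x)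
    [IsAdicComplete (Ideal.span {x}) A] (hN2 : IsN2 (A ⧸ Ideal.span {x})) : IsN2 A := by
  refine isN2_of_isPurelyInseparable fun K L _ _ _ _ _ _ _ _ _ => ?_
  have : CharP K p := charP_of_injective_algebraMap (IsFractionRing.injective A K) p
  have : ExpChar K p := ExpChar.prime Fact.out
  obtain ⟨e, he⟩ := (IsPurelyInseparable.hasExponent_iff' K L p).mp inferInstance
  obtain ⟨L', _, _, f, _, hpow, y, hy⟩ :=
    exists_finiteDimensional_extension_pow_eq p e he (algebraMap A K x)
  let _ : Algebra A L' := ((algebraMap K L').comp (algebraMap A K)).toAlgebra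
  have : IsScalarTower A K L' := IsScalarTower.of_algebraMap_eq fun _ => rfl
  have : Module.Finite A (integralClosure A L') := finite_integralClosure_of_pow_mem_range (K := K)
    (expChar_pow_pos K p e).ne' hpow hx hN2 hy
  exact finite_integralClosure_of_algHom_injective (f.restrictScalars A) f.injective

theorem IsN2.powerSeries {D : Type u} [CommRing D] [IsDomain D] [IsNoetherianRing D]
    [IsIntegrallyClosed D] (p : ℕ) [Fact p.Prime] [CharP D p] (hD : IsN2 D) :
    IsN2 (PowerSeries D) := by
  have : CharP (PowerSeries D) p := charP_of_injective_ringHom PowerSeries.C_injective p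
  have : (Ideal.span {(PowerSeries.X : PowerSeries D)}).IsPrime :=
    (Ideal.span_singleton_prime PowerSeries.X_ne_zero).mpr PowerSeries.X_prime
  exact IsN2.of_quotient_span_singleton p PowerSeries.X_prime
    (hD.of_ringEquiv (powerSeriesQuotientXEquiv D).symm)

theorem isN2_mvPowerSeries (k : Type u) [Field k] (p : ℕ) [Fact p.Prime] [CharP k p] (n : ℕ) :
    IsN2 (MvPowerSeries (Fin n) k) := by
  induction n with
  | zero =>
    exact (isN2_field k).of_ringEquiv (MvPowerSeries.isEmptyEquiv (Fin 0) k).symm.toRingEquiv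
  | succ n ih =>
    have : CharP (MvPowerSeries (Fin n) k) p :=
      charP_of_injective_ringHom (MvPowerSeries.C_injective (σ := Fin n) (R := k)) p
    exact (ih.powerSeries p).of_ringEquiv (MvPowerSeries.finSuccEquiv k n).symm.toRingEquiv

/-! ### Coefficient rings -/

theorem injOn_adjoin_singleton_of_pow_eq {F Q k : Type*} [Field F] [CommRing Q] [Field k]
    [Algebra F Q] [Algebra F k] (p : ℕ) [Fact p.Prime] [CharP k p] (f : Q →ₐ[F] k) {τ : Q} {a : F}
    (ha : τ ^ p = algebraMap F Q a) (hτ : f τ ∉ (algebraMap F k).range) :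
    Set.InjOn f (Algebra.adjoin F {τ}) := by
  have hp : p.Prime := Fact.out
  have hroot : Polynomial.aeval τ (Polynomial.X ^ p - Polynomial.C a) = 0 := by simp [ha]
  have hirr : Irreducible (Polynomial.X ^ p - Polynomial.C a) := by
    refine X_pow_sub_C_irreducible_of_prime hp fun b hb => hτ ⟨b, frobenius_inj k p ?_⟩
    rw [frobenius_def, frobenius_def, ← map_pow, ← map_pow, hb, ha, f.commutes]
  have hmin : Polynomial.X ^ p - Polynomial.C a = minpoly F (f τ) :=
    minpoly.eq_of_irreducible_of_monic hirr
      (by rw [Polynomial.aeval_algHom_apply, hroot, map_zero])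
      (Polynomial.monic_X_pow_sub_C a hp.ne_zero)
  refine (Set.injOn_iff_map_eq_zero f (Algebra.adjoin F {τ})).mpr fun x hx hfx => ?_
  obtain ⟨g, rfl⟩ := (Algebra.adjoin_singleton_eq_range_aeval F τ).le hx
  have hg : Polynomial.aeval (f τ) g = 0 := by
    rw [Polynomial.aeval_algHom_apply]
    exact hfx
  obtain ⟨h, rfl⟩ := hmin ▸ minpoly.dvd F (f τ) hg
  simp [ha]

section LiftResidueField

variable {Q k : Type*} [CommRing Q] [Field k] {p : ℕ} {f : Q →+* k} {S : Subring Q}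

theorem isField_of_injOn_of_pow_mem (hp : p ≠ 0) (hf : Function.Surjective f)
    (hpow : ∀ x, x ^ p ∈ S) (hinj : Set.InjOn f S) : IsField S := by
  have : Nontrivial Q := f.domain_nontrivial
  refine ⟨⟨0, 1, zero_ne_one⟩, mul_comm, ?_⟩
  rintro ⟨s, hs⟩ hs0
  have hfs : f s ≠ 0 := fun h =>
    hs0 (Subtype.ext (hinj hs (zero_mem S) (h.trans (map_zero f).symm)))
  obtain ⟨u, hu⟩ := hf (f s)⁻¹
  have hsu : s ^ p * u ^ p = 1 := hinj (mul_mem (hpow s) (hpow u)) (one_mem S) (by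
    rw [map_mul, map_pow, map_pow, hu, ← mul_pow, mul_inv_cancel₀ hfs, one_pow, map_one])
  refine ⟨⟨s ^ (p - 1) * u ^ p, mul_mem (pow_mem hs _) (hpow u)⟩, Subtype.ext ?_⟩
  change s * (s ^ (p - 1) * u ^ p) = 1
  rw [← mul_assoc, mul_pow_sub_one hp, hsu]

variable [Fact p.Prime] [CharP Q p]

theorem exists_maximal_subring_injOn (hker : ∀ v, f v = 0 → v ^ p = 0) :
    ∃ S : Subring Q, Maximal (fun S : Subring Q => (∀ x, x ^ p ∈ S) ∧ Set.InjOn f S) S := by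
  have hfrob : Set.InjOn f (frobenius Q p).range := by
    refine (Set.injOn_iff_map_eq_zero f _).mpr ?_
    rintro _ ⟨x, rfl⟩ hx
    rw [frobenius_def, map_pow, pow_eq_zero_iff (NeZero.ne p)] at hx
    exact hker x hx
  have hsup (c : Set (Subring Q)) (hc : IsChain (· ≤ ·) c) (hinj : ∀ U ∈ c, Set.InjOn f U)
      (hne : c.Nonempty) : Set.InjOn f (sSup c : Subring Q) := by
    refine (Set.injOn_iff_map_eq_zero f (sSup c)).mpr fun x hx hfx => ?_
    obtain ⟨U, hU, hxU⟩ := (Subring.mem_sSup_of_directedOn hne hc.directedOn).mp hx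
    exact (Set.injOn_iff_map_eq_zero f U).mp (hinj U hU) x hxU hfx
  obtain ⟨S, -, hS⟩ := zorn_le_nonempty₀ {S : Subring Q | (∀ x, x ^ p ∈ S) ∧ Set.InjOn f S}
    (fun c hc hchain T hT => ⟨sSup c, ⟨fun x => le_sSup (a := T) hT ((hc hT).1 x),
      hsup c hchain (fun U hU => (hc hU).2) ⟨T, hT⟩⟩, fun _ => le_sSup⟩)
    (frobenius Q p).range ⟨fun x => ⟨x, rfl⟩, hfrob⟩
  exact ⟨S, hS⟩

theorem exists_subring_bijOn (hf : Function.Surjective f) (hker : ∀ v, f v = 0 → v ^ p = 0) :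
    ∃ S : Subring Q, Set.BijOn f S Set.univ := by
  obtain ⟨S, ⟨hpow, hinj⟩, hmax⟩ := exists_maximal_subring_injOn hker
  refine ⟨S, fun _ _ => trivial, hinj, ?_⟩
  by_contra! hS
  obtain ⟨y, -, hy⟩ := Set.not_subset.mp hS
  obtain ⟨τ, rfl⟩ := hf y
  have : CharP k p := by
    rw [CharP.charP_iff_prime_eq_zero Fact.out, ← map_natCast f, CharP.cast_eq_zero, map_zero]
  let : Field S := (isField_of_injOn_of_pow_mem (NeZero.ne p) hf hpow hinj).toField
  let : Algebra S k := (f.comp S.subtype).toAlgebra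
  let fS : Q →ₐ[S] k := { f with commutes' := fun _ => rfl }
  have hST : S ≤ (Algebra.adjoin S {τ}).toSubring :=
    fun s hs => (Algebra.adjoin S {τ}).algebraMap_mem ⟨s, hs⟩
  have hT := injOn_adjoin_singleton_of_pow_eq p fS (a := ⟨τ ^ p, hpow τ⟩) rfl
    fun ⟨s, hs⟩ => hy ⟨s, s.2, hs⟩
  exact hy ⟨τ, hmax ⟨fun x => hST (hpow x), hT⟩ hST (Algebra.subset_adjoin rfl), rfl⟩

end LiftResidueField

theorem exists_subring_lifting_residueField {D k : Type*} [CommRing D] [Field k] (p : ℕ)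
    [Fact p.Prime] {f : D →+* k} (hf : Function.Surjective f) {J : Ideal D}
    (hJ : J ≤ RingHom.ker f) (hpJ : (p : D) ∈ J) (hpow : ∀ x ∈ RingHom.ker f, x ^ p ∈ J) :
    ∃ S : Subring D, (∀ x ∈ J, x ∈ S) ∧ (∀ x ∈ S, f x = 0 → x ∈ J) ∧ ∀ y, ∃ s ∈ S, f s = y := by
  let g : D ⧸ J →+* k := Ideal.Quotient.lift J f hJ
  have : Nontrivial (D ⧸ J) := g.domain_nontrivial
  have : CharP (D ⧸ J) p := by
    rw [CharP.charP_iff_prime_eq_zero Fact.out, ← map_natCast (Ideal.Quotient.mk J)]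
    exact Ideal.Quotient.eq_zero_iff_mem.mpr hpJ
  have hker (v : D ⧸ J) (hv : g v = 0) : v ^ p = 0 := by
    obtain ⟨x, rfl⟩ := Ideal.Quotient.mk_surjective v
    rw [← map_pow]
    exact Ideal.Quotient.eq_zero_iff_mem.mpr (hpow x hv)
  obtain ⟨S, -, hinj, hsurj⟩ :=
    exists_subring_bijOn (Ideal.Quotient.lift_surjective_of_surjective J hJ hf) hker
  refine ⟨S.comap (Ideal.Quotient.mk J), fun x hx => ?_, fun x hx hfx => ?_, fun y => ?_⟩
  · rw [Subring.mem_comap, Ideal.Quotient.eq_zero_iff_mem.mpr hx]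
    exact zero_mem S
  · exact Ideal.Quotient.eq_zero_iff_mem.mp
      (hinj hx (zero_mem S) (Eq.trans hfx (map_zero g).symm))
  · obtain ⟨s, hs, rfl⟩ := hsurj (Set.mem_univ y)
    obtain ⟨x, rfl⟩ := Ideal.Quotient.mk_surjective s
    exact ⟨x, hs, rfl⟩

section CoeffSubring

/-- `D` is a coefficient ring of `A` up to order `n`: it contains `𝔪ⁿ`, it surjects onto the
residue field, and `D ∩ 𝔪 ⊆ pD + 𝔪ⁿ`. -/
structure IsCoeffSubringMod {A : Type*} [CommRing A] [IsLocalRing A] (p n : ℕ)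
    (D : Subring A) : Prop where
  mem_of_mem_pow : ∀ x ∈ maximalIdeal A ^ n, x ∈ D
  exists_sub_mem : ∀ a : A, ∃ d ∈ D, a - d ∈ maximalIdeal A
  exists_sub_mul_mem : ∀ x ∈ D, x ∈ maximalIdeal A → ∃ d ∈ D, x - p * d ∈ maximalIdeal A ^ n

/-- `C` is a coefficient ring of `A`: it is closed for the `𝔪`-adic topology, it surjects onto the
residue field, and `C ∩ 𝔪 = pC`. -/
structure IsCoeffSubring {A : Type*} [CommRing A] [IsLocalRing A] (p : ℕ)
    (C : Subring A) : Prop where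
  mem_of_forall_exists_sub_mem : ∀ x, (∀ n, ∃ c ∈ C, x - c ∈ maximalIdeal A ^ n) → x ∈ C
  exists_sub_mem : ∀ a : A, ∃ c ∈ C, a - c ∈ maximalIdeal A
  exists_eq_mul : ∀ x ∈ C, x ∈ maximalIdeal A → ∃ c ∈ C, x = p * c

theorem exists_limit_of_sub_succ_mem_pow {A : Type*} [CommRing A] (I : Ideal A) [IsPrecomplete I A]
    (n : ℕ) (s : ℕ → A) (hs : ∀ j, s j - s (j + 1) ∈ I ^ (n + j)) :
    ∃ l, ∀ j, s j - l ∈ I ^ (n + j) := by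
  have hadd (j k : ℕ) : s j - s (j + k) ∈ I ^ (n + j) := by
    induction k with
    | zero => simp
    | succ k ih =>
      have hstep := Ideal.pow_le_pow_right (by lia : n + j ≤ n + (j + k)) (hs (j + k))
      simpa [add_assoc] using add_mem ih hstep
  obtain ⟨l, hl⟩ := IsPrecomplete.prec' (I := I) s fun {a b} hab => by
    obtain ⟨k, rfl⟩ := Nat.exists_eq_add_of_le hab
    rw [SModEq.sub_mem, smul_eq_mul, Ideal.mul_top]
    exact Ideal.pow_le_pow_right (Nat.le_add_left a n) (hadd a k)
  refine ⟨l, fun j => ?_⟩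
  have hlim := hl (j + n)
  rw [SModEq.sub_mem, smul_eq_mul, Ideal.mul_top, add_comm j n] at hlim
  simpa [add_comm j n] using add_mem (hadd j n) hlim

theorem eq_zero_of_forall_mem_pow {A : Type*} [CommRing A] (I : Ideal A) [IsHausdorff I A] {x : A}
    (hx : ∀ n, x ∈ I ^ n) : x = 0 :=
  IsHausdorff.haus' (I := I) x fun n => by simpa [SModEq.zero] using hx n

theorem exists_forall_mem_pow_of_mul_mem_pow {A : Type*} [CommRing A] [IsNoetherianRing A]
    (I : Ideal A) {x : A} (hx : x ∈ nonZeroDivisors A) :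
    ∃ k, ∀ n b, x * b ∈ I ^ (n + k) → b ∈ I ^ n := by
  obtain ⟨k, hk⟩ := Ideal.exists_pow_inf_eq_pow_smul I (Ideal.span {x})
  refine ⟨k, fun n b hb => ?_⟩
  have hinf : x * b ∈ (I ^ (n + k) • ⊤ ⊓ Ideal.span {x} : Ideal A) :=
    ⟨by simpa using hb, Ideal.mem_span_singleton.mpr ⟨b, rfl⟩⟩
  rw [hk (n + k) (Nat.le_add_left k n), Nat.add_sub_cancel] at hinf
  obtain ⟨z, hz, hzb⟩ := Ideal.mem_mul_span_singleton.mp (Ideal.mul_mono_right inf_le_right hinf)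
  rwa [← (mul_cancel_left_mem_nonZeroDivisors hx).mp ((mul_comm x z).trans hzb)]

theorem exists_eq_mul_of_forall_exists_sub_mul_mem_pow {A : Type*} [CommRing A] [IsDomain A]
    [IsNoetherianRing A] (I : Ideal A) [IsAdicComplete I A] {C : Set A}
    (hC : ∀ x, (∀ n, ∃ c ∈ C, x - c ∈ I ^ n) → x ∈ C) {x y : A}
    (hxy : ∀ n, ∃ c ∈ C, x - y * c ∈ I ^ n) : ∃ c ∈ C, x = y * c := by
  choose c hc hxc using hxy
  rcases eq_or_ne y 0 with rfl | hy
  · exact ⟨c 0, hc 0, by simpa using eq_zero_of_forall_mem_pow I (x := x) (by simpa using hxc)⟩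
  obtain ⟨k, hk⟩ := exists_forall_mem_pow_of_mul_mem_pow I (mem_nonZeroDivisors_of_ne_zero hy)
  obtain ⟨l, hl⟩ := exists_limit_of_sub_succ_mem_pow I 0 (fun n => c (n + k)) fun j => by
    refine (zero_add j).symm ▸ hk j _ ?_
    have hnext := Ideal.pow_le_pow_right (by lia : j + k ≤ j + 1 + k) (hxc (j + 1 + k))
    convert sub_mem hnext (hxc (j + k)) using 1
    ring
  simp only [zero_add] at hl
  refine ⟨l, hC l fun n => ⟨c (n + k), hc _, neg_sub (c (n + k)) l ▸ neg_mem (hl n)⟩, ?_⟩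
  refine sub_eq_zero.mp (eq_zero_of_forall_mem_pow I fun n => ?_)
  have hsplit : x - y * l = (x - y * c (n + k)) + y * (c (n + k) - l) := by ring
  exact hsplit ▸ add_mem (Ideal.pow_le_pow_right (Nat.le_add_right n k) (hxc (n + k)))
    (Ideal.mul_mem_left _ _ (hl n))

variable {A : Type*} [CommRing A] [IsLocalRing A] {p : ℕ}

namespace IsCoeffSubringMod

theorem exists_mem_iInf_sub_mem [IsPrecomplete (maximalIdeal A) A] {D : ℕ → Subring A}
    (hanti : Antitone D) (hD : ∀ n, IsCoeffSubringMod p (n + 1) (D n))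
    (happrox : ∀ n, ∀ d ∈ D n, ∃ d' ∈ D (n + 1), d - d' ∈ maximalIdeal A ^ (n + 1))
    {n : ℕ} {d : A} (hd : d ∈ D n) : ∃ c ∈ ⨅ n, D n, d - c ∈ maximalIdeal A ^ (n + 1) := by
  choose! next hnext hsub using happrox
  let s : ℕ → A := fun j => Nat.rec d (fun j x => next (n + j) x) j
  have hs (j : ℕ) : s j ∈ D (n + j) := by
    induction j with
    | zero => exact hd
    | succ j ih => exact hnext _ _ ih
  obtain ⟨l, hl⟩ := exists_limit_of_sub_succ_mem_pow (maximalIdeal A) (n + 1) s fun j => by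
    rw [add_right_comm]
    exact hsub (n + j) (s j) (hs j)
  refine ⟨l, Subring.mem_iInf.mpr fun j => hanti (Nat.le_add_left j n) ?_, hl 0⟩
  have hsl : s j - l ∈ D (n + j) := (hD (n + j)).mem_of_mem_pow _ (add_right_comm n 1 j ▸ hl j)
  simpa using sub_mem (hs j) hsl

variable [Fact p.Prime] {n : ℕ} {D : Subring A}

theorem exists_pow_sub_mul_mem (hn : n ≠ 0) (hD : IsCoeffSubringMod p n D) {x : A} (hxD : x ∈ D)
    (hx : x ∈ maximalIdeal A) : ∃ d ∈ D, x ^ p - p * d ∈ maximalIdeal A ^ (n + 1) := by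
  obtain ⟨d, hd, hxd⟩ := hD.exists_sub_mul_mem x hxD hx
  let y : D := ⟨x - p * d, hD.mem_of_mem_pow _ hxd⟩
  obtain ⟨q, hq⟩ := sub_dvd_pow_sub_pow (⟨x, hxD⟩ : D) y p
  have hpow : x ^ p - p * (d * q) = (x - p * d) ^ p := by
    have := congrArg Subtype.val hq
    push_cast at this
    linear_combination this
  have hle : n + 1 ≤ n * p := by
    have := Nat.mul_le_mul_left n (Fact.out : p.Prime).two_le
    lia
  refine ⟨d * q, mul_mem hd q.2, ?_⟩
  rw [hpow]
  refine Ideal.pow_le_pow_right hle ?_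
  rw [pow_mul]
  exact Ideal.pow_mem_pow hxd p

theorem exists_subring_le (hp : (p : A) ∈ maximalIdeal A) (hn : n ≠ 0)
    (hD : IsCoeffSubringMod p n D) :
    ∃ D' ≤ D, (∀ d ∈ D, ∀ x, x - p * d ∈ maximalIdeal A ^ (n + 1) → x ∈ D') ∧
      (∀ x ∈ D', x ∈ maximalIdeal A → ∃ d ∈ D, x - p * d ∈ maximalIdeal A ^ (n + 1)) ∧
      ∀ a : A, ∃ d ∈ D', a - d ∈ maximalIdeal A := by
  let f : D →+* ResidueField A := (residue A).comp D.subtype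
  have hfker (x : D) : f x = 0 ↔ (x : A) ∈ maximalIdeal A := residue_eq_zero_iff _
  let J : Ideal D := Ideal.span {(p : D)} ⊔ (maximalIdeal A ^ (n + 1)).comap D.subtype
  have hJ (x : D) : x ∈ J ↔ ∃ d : D, (x : A) - p * d ∈ maximalIdeal A ^ (n + 1) := by
    simp only [J, Submodule.mem_sup, Ideal.mem_span_singleton', Ideal.mem_comap]
    constructor
    · rintro ⟨_, ⟨d, rfl⟩, b, hb, rfl⟩
      exact ⟨d, by simpa [mul_comm] using hb⟩
    · rintro ⟨d, hd⟩
      exact ⟨_, ⟨d, rfl⟩, x - d * p, by simpa [mul_comm] using hd, by ring⟩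
  have hfsurj : Function.Surjective f := fun y => by
    obtain ⟨a, rfl⟩ := residue_surjective y
    obtain ⟨d, hd, had⟩ := hD.exists_sub_mem a
    exact ⟨⟨d, hd⟩, (Ideal.Quotient.eq.mpr had).symm⟩
  have hJker : J ≤ RingHom.ker f := fun x hx => by
    obtain ⟨d, hd⟩ := (hJ x).mp hx
    have := add_mem (Ideal.pow_le_self n.succ_ne_zero hd) (Ideal.mul_mem_right (d : A) _ hp)
    exact (hfker x).mpr (by simpa using this)
  have hpow (x : D) (hx : x ∈ RingHom.ker f) : x ^ p ∈ J := by
    obtain ⟨d, hd, hxd⟩ := hD.exists_pow_sub_mul_mem hn x.2 ((hfker x).mp hx)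
    exact (hJ _).mpr ⟨⟨d, hd⟩, hxd⟩
  obtain ⟨S, hJS, hSJ, hSsurj⟩ := exists_subring_lifting_residueField p hfsurj hJker
    (Ideal.mem_sup_left (Ideal.mem_span_singleton_self _)) hpow
  refine ⟨S.map D.subtype, ?_, fun d hd x hx => ?_, ?_, fun a => ?_⟩
  · rintro _ ⟨x, -, rfl⟩
    exact x.2
  · have hxD : x ∈ D := by
      simpa using add_mem (hD.mem_of_mem_pow _ (Ideal.pow_le_pow_right n.le_succ hx))
        (mul_mem (natCast_mem D p) hd)
    exact ⟨⟨x, hxD⟩, hJS _ ((hJ _).mpr ⟨⟨d, hd⟩, hx⟩), rfl⟩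
  · rintro _ ⟨x, hx, rfl⟩ hxm
    obtain ⟨d, hd⟩ := (hJ x).mp (hSJ x hx ((hfker x).mpr hxm))
    exact ⟨d, d.2, hd⟩
  · obtain ⟨s, hs, hsa⟩ := hSsurj (residue A a)
    exact ⟨s, ⟨s, hs, rfl⟩, Ideal.Quotient.eq.mp hsa.symm⟩

theorem exists_succ (hp : (p : A) ∈ maximalIdeal A) (hn : n ≠ 0) (hD : IsCoeffSubringMod p n D) :
    ∃ D' ≤ D, IsCoeffSubringMod p (n + 1) D' ∧
      ∀ d ∈ D, ∃ d' ∈ D', d - d' ∈ maximalIdeal A ^ n := by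
  obtain ⟨D', hle, hmem, hdiv, hres⟩ := hD.exists_subring_le hp hn
  have happrox (d : A) (hd : d ∈ D) : ∃ d' ∈ D', d - d' ∈ maximalIdeal A ^ n := by
    obtain ⟨d', hd', hdd'⟩ := hres d
    obtain ⟨e, he, hdde⟩ := hD.exists_sub_mul_mem _ (sub_mem hd (hle hd')) hdd'
    exact ⟨d' + p * e, add_mem hd' (hmem e he _ (by simp)), by rwa [← sub_sub]⟩
  refine ⟨D', hle, ⟨fun x hx => hmem 0 (zero_mem D) x (by simpa using hx), hres, ?_⟩, happrox⟩
  intro x hx hxm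
  obtain ⟨d, hd, hxd⟩ := hdiv x hx hxm
  obtain ⟨d', hd', hdd'⟩ := happrox d hd
  refine ⟨d', hd', ?_⟩
  have hsplit : x - p * d' = (x - p * d) + p * (d - d') := by ring
  rw [hsplit, pow_succ']
  exact add_mem (pow_succ' (maximalIdeal A) n ▸ hxd) (Ideal.mul_mem_mul hp hdd')

theorem exists_chain (hp : (p : A) ∈ maximalIdeal A) : ∃ D : ℕ → Subring A, Antitone D ∧
    (∀ n, IsCoeffSubringMod p (n + 1) (D n)) ∧
      ∀ n, ∀ d ∈ D n, ∃ d' ∈ D (n + 1), d - d' ∈ maximalIdeal A ^ (n + 1) := by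
  have htop : IsCoeffSubringMod p 1 (⊤ : Subring A) :=
    ⟨fun _ _ => trivial, fun a => ⟨a, trivial, by simp⟩,
      fun x _ hx => ⟨0, trivial, by simpa using hx⟩⟩
  choose! next hle hnext happrox using
    fun (n : ℕ) (D : Subring A) => exists_succ (n := n + 1) (D := D) hp n.succ_ne_zero
  let D : ℕ → Subring A := fun n => Nat.rec ⊤ next n
  have hD (n : ℕ) : IsCoeffSubringMod p (n + 1) (D n) := by
    induction n with
    | zero => exact htop
    | succ n ih => exact hnext n _ ih
  exact ⟨D, antitone_nat_of_succ_le fun n => hle n _ (hD n), hD, fun n => happrox n _ (hD n)⟩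

end IsCoeffSubringMod

theorem exists_isCoeffSubring [Fact p.Prime] [IsDomain A] [IsNoetherianRing A]
    [IsAdicComplete (maximalIdeal A) A] (hp : (p : A) ∈ maximalIdeal A) :
    ∃ C : Subring A, IsCoeffSubring p C := by
  obtain ⟨D, hanti, hD, hDsucc⟩ := IsCoeffSubringMod.exists_chain hp
  have happrox {n : ℕ} {d : A} (hd : d ∈ D n) :=
    IsCoeffSubringMod.exists_mem_iInf_sub_mem hanti hD hDsucc hd
  have hclosed (x : A) (hx : ∀ n, ∃ c ∈ ⨅ n, D n, x - c ∈ maximalIdeal A ^ n) :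
      x ∈ ⨅ n, D n := by
    refine Subring.mem_iInf.mpr fun n => ?_
    obtain ⟨c, hc, hxc⟩ := hx (n + 1)
    simpa using add_mem ((hD n).mem_of_mem_pow _ hxc) (Subring.mem_iInf.mp hc n)
  refine ⟨⨅ n, D n, hclosed, fun a => ?_, fun x hx hxm => ?_⟩
  · obtain ⟨d, hd, had⟩ := (hD 0).exists_sub_mem a
    obtain ⟨c, hc, hdc⟩ := happrox hd
    exact ⟨c, hc, sub_add_sub_cancel a d c ▸ add_mem had (by rwa [zero_add, pow_one] at hdc)⟩
  have hxp (n : ℕ) : ∃ c ∈ ⨅ n, D n, x - p * c ∈ maximalIdeal A ^ n := by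
    obtain ⟨d, hd, hxd⟩ := (hD n).exists_sub_mul_mem x (Subring.mem_iInf.mp hx n) hxm
    obtain ⟨c, hc, hdc⟩ := happrox hd
    have hsplit : x - p * c = (x - p * d) + p * (d - c) := by ring
    exact ⟨c, hc, Ideal.pow_le_pow_right n.le_succ
      (hsplit ▸ add_mem hxd (Ideal.mul_mem_left _ _ hdc))⟩
  exact exists_eq_mul_of_forall_exists_sub_mul_mem_pow (maximalIdeal A) hclosed hxp

end CoeffSubring

namespace IsCoeffSubring

variable {A : Type*} [CommRing A] [IsLocalRing A] {p : ℕ} {C : Subring A}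

theorem natCast_dvd (hC : IsCoeffSubring p C) {x : C} (hx : (x : A) ∈ maximalIdeal A) :
    (p : C) ∣ x := by
  obtain ⟨c, hc, hxc⟩ := hC.exists_eq_mul x x.2 hx
  exact ⟨⟨c, hc⟩, Subtype.ext (by simpa using hxc)⟩

theorem mem_pow_of_pow_dvd (hp : (p : A) ∈ maximalIdeal A) {n : ℕ} {x : C}
    (hx : (p : C) ^ n ∣ x) : (x : A) ∈ maximalIdeal A ^ n := by
  obtain ⟨y, rfl⟩ := hx
  push_cast
  exact Ideal.mul_mem_right _ _ (Ideal.pow_mem_pow hp n)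

-- The inverse `b` of `x` satisfies `b = u + p * e * b` for some `u, e ∈ C`, so iterating this
-- equation approximates `b` by elements of `C`.
theorem isUnit_iff (hC : IsCoeffSubring p C) (hp : (p : A) ∈ maximalIdeal A) {x : C} :
    IsUnit x ↔ (x : A) ∉ maximalIdeal A := by
  refine ⟨fun hx => notMem_maximalIdeal.mpr (hx.map C.subtype), fun hx => ?_⟩
  obtain ⟨b, hb⟩ := (notMem_maximalIdeal.mp hx).exists_right_inv
  obtain ⟨u, hu, hbu⟩ := hC.exists_sub_mem b
  obtain ⟨e, he⟩ : (p : C) ∣ 1 - x * ⟨u, hu⟩ := hC.natCast_dvd (by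
    simpa [mul_sub, hb] using Ideal.mul_mem_left _ (x : A) hbu)
  have hbe : b = u + p * e * b := by
    have := congrArg Subtype.val he
    push_cast at this
    linear_combination b * this + u * hb
  have hbC : b ∈ C := hC.mem_of_forall_exists_sub_mem b fun n => by
    induction n with
    | zero => exact ⟨0, zero_mem C, by simp⟩
    | succ n ih =>
      obtain ⟨c, hc, hbc⟩ := ih
      refine ⟨u + p * e * c, add_mem hu (mul_mem (mul_mem (natCast_mem C p) e.2) hc), ?_⟩
      have hsplit : b - (u + p * e * c) = p * (e * (b - c)) := by linear_combination hbe
      rw [hsplit, pow_succ']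
      exact Ideal.mul_mem_mul hp (Ideal.mul_mem_left _ _ hbc)
  exact IsUnit.of_mul_eq_one ⟨b, hbC⟩ (Subtype.ext hb)

theorem isLocalRing (hC : IsCoeffSubring p C) (hp : (p : A) ∈ maximalIdeal A) : IsLocalRing C := by
  refine IsLocalRing.of_nonunits_add fun a b ha hb => ?_
  rw [mem_nonunits_iff, hC.isUnit_iff hp, not_not] at ha hb ⊢
  exact add_mem ha hb

theorem maximalIdeal_eq_span [IsLocalRing C] (hC : IsCoeffSubring p C)
    (hp : (p : A) ∈ maximalIdeal A) : maximalIdeal C = Ideal.span {(p : C)} := by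
  ext x
  rw [mem_maximalIdeal, mem_nonunits_iff, hC.isUnit_iff hp, not_not, Ideal.mem_span_singleton]
  exact ⟨hC.natCast_dvd, fun hx => by
    simpa using mem_pow_of_pow_dvd (n := 1) hp (by simpa using hx)⟩

section Hausdorff

variable [IsHausdorff (maximalIdeal A) A]

theorem eq_zero_of_forall_pow_dvd (hp : (p : A) ∈ maximalIdeal A) {x : C}
    (hx : ∀ n, (p : C) ^ n ∣ x) : x = 0 :=
  Subtype.ext (eq_zero_of_forall_mem_pow (maximalIdeal A) fun n => mem_pow_of_pow_dvd hp (hx n))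

-- On `C`, the `p`-adic topology is the `𝔪`-adic one.
theorem exists_forall_pow_dvd_of_mem_pow (hC : IsCoeffSubring p C) (n : ℕ) :
    ∃ N, ∀ x : C, (x : A) ∈ maximalIdeal A ^ N → (p : C) ^ n ∣ x := by
  induction n with
  | zero => exact ⟨0, fun x _ => by simp⟩
  | succ n ih =>
    obtain ⟨N, hN⟩ := ih
    by_cases hpn : ∀ M, (p : A) ^ n ∈ maximalIdeal A ^ M
    · have hpC : (p : C) ^ n = 0 :=
        Subtype.ext (by simpa using eq_zero_of_forall_mem_pow (maximalIdeal A) hpn)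
      exact ⟨N, fun x hx => by simpa [pow_succ, hpC] using hN x hx⟩
    push Not at hpn
    obtain ⟨M, hM⟩ := hpn
    refine ⟨N ⊔ M, fun x hx => ?_⟩
    obtain ⟨y, rfl⟩ := hN x (Ideal.pow_le_pow_right le_sup_left hx)
    rw [pow_succ]
    refine mul_dvd_mul_left _ (hC.natCast_dvd ?_)
    by_contra hy
    refine hM ((Ideal.mul_unit_mem_iff_mem _ (notMem_maximalIdeal.mp hy)).mp ?_)
    simpa using Ideal.pow_le_pow_right le_sup_right hx

end Hausdorff

theorem isAdicComplete [IsAdicComplete (maximalIdeal A) A] (hC : IsCoeffSubring p C)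
    (hp : (p : A) ∈ maximalIdeal A) : IsAdicComplete (Ideal.span {(p : C)}) C := by
  have hmem (n : ℕ) (x : C) : x ∈ (Ideal.span {(p : C)} ^ n • ⊤ : Ideal C) ↔ (p : C) ^ n ∣ x := by
    rw [Ideal.span_singleton_pow, smul_eq_mul, Ideal.mul_top, Ideal.mem_span_singleton]
  refine { haus' := fun x hx => eq_zero_of_forall_pow_dvd hp fun n => ?_,
           prec' := fun f hf => ?_ }
  · exact (hmem n x).mp (SModEq.zero.mp (hx n))
  have hcauchy {m n : ℕ} (hmn : m ≤ n) : (p : C) ^ m ∣ f m - f n :=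
    (hmem m _).mp (SModEq.sub_mem.mp (hf hmn))
  obtain ⟨l, hl⟩ := exists_limit_of_sub_succ_mem_pow (maximalIdeal A) 0 (fun n => (f n : A))
    fun n => (zero_add n).symm ▸ mem_pow_of_pow_dvd hp (hcauchy n.le_succ)
  simp only [zero_add] at hl
  have hlC : l ∈ C := hC.mem_of_forall_exists_sub_mem l fun n =>
    ⟨f n, (f n).2, neg_sub (f n : A) l ▸ neg_mem (hl n)⟩
  refine ⟨⟨l, hlC⟩, fun n => SModEq.sub_mem.mpr ((hmem n _).mpr ?_)⟩
  obtain ⟨N, hN⟩ := hC.exists_forall_pow_dvd_of_mem_pow n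
  have hlim : (p : C) ^ n ∣ f (n ⊔ N) - ⟨l, hlC⟩ :=
    hN _ (Ideal.pow_le_pow_right le_sup_right (hl _))
  simpa using dvd_add (hcauchy (le_sup_left : n ≤ n ⊔ N)) hlim

theorem isField (hC : IsCoeffSubring p C) (hp : (p : A) = 0) : IsField C := by
  refine ⟨⟨0, 1, zero_ne_one⟩, mul_comm, fun {x} hx => ?_⟩
  refine ((hC.isUnit_iff (hp ▸ zero_mem _)).mpr fun hxm => hx ?_).exists_right_inv
  obtain ⟨c, -, hc⟩ := hC.exists_eq_mul x x.2 hxm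
  exact Subtype.ext (by simpa [hp] using hc)

variable [IsDomain A]

theorem isDiscreteValuationRing [IsHausdorff (maximalIdeal A) A] (hC : IsCoeffSubring p C)
    (hp : (p : A) ∈ maximalIdeal A) (hp0 : (p : A) ≠ 0) : IsDiscreteValuationRing C := by
  have hnot_unit : ¬ IsUnit (p : C) := by
    rw [hC.isUnit_iff hp, not_not]
    simpa using hp
  have hunit (x : C) (hx : ¬ (p : C) ∣ x) : IsUnit x :=
    (hC.isUnit_iff hp).mpr fun hxm => hx (hC.natCast_dvd hxm)
  have hprime : Prime (p : C) := by
    refine ⟨fun h => hp0 (by simpa using congrArg Subtype.val h), hnot_unit, fun a b hab => ?_⟩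
    by_contra! h
    exact hnot_unit (isUnit_of_dvd_unit hab ((hunit a h.1).mul (hunit b h.2)))
  refine IsDiscreteValuationRing.ofHasUnitMulPowIrreducibleFactorization
    ⟨p, hprime.irreducible, fun {x} hx => ?_⟩
  have hfinite : FiniteMultiplicity (p : C) x := by
    by_contra h
    exact hx (eq_zero_of_forall_pow_dvd hp (FiniteMultiplicity.not_iff_forall.mp h))
  obtain ⟨c, hc, hpc⟩ := hfinite.exists_eq_pow_mul_and_not_dvd
  obtain ⟨u, rfl⟩ := hunit c hpc
  exact ⟨_, u, hc.symm⟩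

end IsCoeffSubring

/-- `φ : C → A` makes `C` a coefficient ring of the local ring `A`: a complete local principal
ideal ring with the same residue field, whose maximal ideal may be zero. -/
structure IsCoefficientRing {C A : Type*} [CommRing C] [IsLocalRing C] [CommRing A] [IsLocalRing A]
    (φ : C →+* A) : Prop where
  isPrincipalIdealRing : IsPrincipalIdealRing C
  isAdicComplete : IsAdicComplete (maximalIdeal C) C
  isLocalHom : IsLocalHom φ
  injective : Function.Injective φ
  surjective_residue : Function.Surjective ((residue A).comp φ)
  isField_or_charZero : IsField C ∨ CharZero C

theorem charZero_of_natCast_mem_maximalIdeal {A : Type*} [CommRing A] [IsDomain A] [IsLocalRing A]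
    {p : ℕ} (hp : (p : A) ∈ maximalIdeal A) (hp0 : (p : A) ≠ 0) : CharZero A := by
  obtain ⟨q, hq⟩ := CharP.exists A
  rcases CharP.char_is_prime_or_zero A q with hprime | rfl
  · have hcop : q.Coprime p :=
      (Nat.Prime.coprime_iff_not_dvd hprime).mpr fun h => hp0 ((CharP.cast_eq_zero_iff A q p).mpr h)
    have hunit := hcop.cast (R := A)
    rw [CharP.cast_eq_zero, isCoprime_zero_left] at hunit
    exact absurd hunit hp
  · exact CharP.charP_to_charZero A

theorem IsCoeffSubring.isCoefficientRing {A : Type*} [CommRing A] [IsDomain A] [IsLocalRing A]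
    [IsAdicComplete (maximalIdeal A) A] {p : ℕ} {C : Subring A} [IsLocalRing C]
    (hC : IsCoeffSubring p C) (hp : (p : A) ∈ maximalIdeal A) : IsCoefficientRing C.subtype where
  isPrincipalIdealRing := by
    by_cases hp0 : (p : A) = 0
    · let := (hC.isField hp0).toField
      exact (inferInstance : IsPrincipalIdealRing C)
    · have := hC.isDiscreteValuationRing hp hp0
      infer_instance
  isAdicComplete := hC.maximalIdeal_eq_span hp ▸ hC.isAdicComplete hp
  isLocalHom := ⟨fun _ hx => (hC.isUnit_iff hp).mpr (notMem_maximalIdeal.mpr hx)⟩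
  injective := Subtype.val_injective
  surjective_residue y := by
    obtain ⟨a, rfl⟩ := residue_surjective y
    obtain ⟨c, hc, hac⟩ := hC.exists_sub_mem a
    exact ⟨⟨c, hc⟩, (Ideal.Quotient.eq.mpr hac).symm⟩
  isField_or_charZero := by
    by_cases hp0 : (p : A) = 0
    · exact Or.inl (hC.isField hp0)
    · have := charZero_of_natCast_mem_maximalIdeal hp hp0
      exact Or.inr inferInstance

theorem exists_isCoefficientRing_of_charZero_residueField (A : Type u) [CommRing A] [IsLocalRing A]
    [IsAdicComplete (maximalIdeal A) A] [CharZero (ResidueField A)] :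
    ∃ φ : ResidueField A →+* A, IsCoefficientRing φ := by
  have hunit (n : nonZeroDivisors ℤ) : IsUnit (Int.castRingHom A n) := by
    rw [← notMem_maximalIdeal, ← residue_eq_zero_iff, eq_intCast, map_intCast, Int.cast_eq_zero]
    exact nonZeroDivisors.coe_ne_zero n
  let : Algebra ℚ A := (IsLocalization.lift (S := ℚ) hunit).toAlgebra
  obtain ⟨ι, x, hx⟩ := exists_isTranscendenceBasis' ℚ (ResidueField A)
  have := hx.isAlgebraic_field
  have : Algebra.FormallySmooth ℚ (ResidueField A) :=
    Algebra.FormallySmooth.of_algebraicIndependent_of_isSeparable hx.1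
  let f : ResidueField A →ₐ[ℚ] A ⧸ maximalIdeal A :=
    RingHom.toRatAlgHom (S := A ⧸ maximalIdeal A) (RingHom.id (ResidueField A))
  obtain ⟨g, hg⟩ := Algebra.FormallySmooth.exists_mkₐ_comp_eq_of_isAdicComplete f
  exact ⟨g.toRingHom, {
    isPrincipalIdealRing := inferInstance
    isAdicComplete := by
      rw [maximalIdeal_eq_bot]
      infer_instance
    isLocalHom := inferInstance
    injective := RingHom.injective _
    surjective_residue := fun y => ⟨y, DFunLike.congr_fun hg y⟩
    isField_or_charZero := Or.inl (Field.toIsField _) }⟩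

theorem exists_isCoefficientRing (A : Type u) [CommRing A] [IsDomain A] [IsLocalRing A]
    [IsNoetherianRing A] [IsAdicComplete (maximalIdeal A) A] :
    ∃ (C : Type u) (_ : CommRing C) (_ : IsLocalRing C) (φ : C →+* A), IsCoefficientRing φ := by
  obtain ⟨p, hp⟩ := CharP.exists (ResidueField A)
  rcases CharP.char_is_prime_or_zero (ResidueField A) p with hprime | rfl
  · have : Fact p.Prime := ⟨hprime⟩
    have hpm : (p : A) ∈ maximalIdeal A := by
      rw [← residue_eq_zero_iff, map_natCast, CharP.cast_eq_zero]
    obtain ⟨C, hC⟩ := exists_isCoeffSubring hpm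
    have := hC.isLocalRing hpm
    exact ⟨C, inferInstance, this, C.subtype, hC.isCoefficientRing hpm⟩
  · have := CharP.charP_to_charZero (ResidueField A)
    obtain ⟨φ, hφ⟩ := exists_isCoefficientRing_of_charZero_residueField A
    exact ⟨ResidueField A, inferInstance, inferInstance, φ, hφ⟩

/-! ### Complete local domains -/

section FiniteOverCoefficientRing

variable {C A : Type*} [CommRing C] [CommRing A] [IsLocalRing A] [IsNoetherianRing A] [Algebra C A]

theorem exists_fg_submodule_forall_sub_mem_pow
    (hres : Function.Surjective ((residue A).comp (algebraMap C A))) (N : ℕ) :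
    ∃ P : Submodule C A, P.FG ∧ ∀ a, ∃ b ∈ P, a - b ∈ maximalIdeal A ^ N := by
  have happrox (a : A) : ∃ c, a - algebraMap C A c ∈ maximalIdeal A := by
    obtain ⟨c, hc⟩ := hres (residue A a)
    exact ⟨c, by rw [← residue_eq_zero_iff, map_sub, ← hc, RingHom.comp_apply, sub_self]⟩
  choose c hc using happrox
  induction N with
  | zero => exact ⟨⊥, Submodule.fg_bot, fun a => ⟨0, zero_mem _, by simp⟩⟩
  | succ N ih =>
    obtain ⟨P, hP, hPN⟩ := ih
    obtain ⟨k, g, hg⟩ := Submodule.fg_iff_exists_fin_generating_family.mp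
      (maximalIdeal A ^ N).fg_of_isNoetherianRing
    refine ⟨P ⊔ Submodule.span C (Set.range g),
      hP.sup (Submodule.fg_span (Set.finite_range g)), fun a => ?_⟩
    obtain ⟨b, hb, hab⟩ := hPN a
    obtain ⟨e, he⟩ := Submodule.mem_span_range_iff_exists_fun A |>.mp (hg ▸ hab)
    refine ⟨b + ∑ i, c (e i) • g i, Submodule.add_mem_sup hb (Submodule.sum_mem _ fun i _ =>
      Submodule.smul_mem _ _ (Submodule.subset_span ⟨i, rfl⟩)), ?_⟩
    have herror : a - (b + ∑ i, c (e i) • g i) = ∑ i, (e i - algebraMap C A (c (e i))) * g i := by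
      simp only [Algebra.smul_def, sub_mul, Finset.sum_sub_distrib]
      rw [← sub_sub, ← he]
      simp only [smul_eq_mul]
    rw [herror, pow_succ']
    exact Ideal.sum_mem _ fun i _ =>
      Ideal.mul_mem_mul (hc _) (hg ▸ Submodule.subset_span ⟨i, rfl⟩)

theorem finite_of_surjective_of_maximalIdeal_pow
    (hres : Function.Surjective ((residue A).comp (algebraMap C A))) {M : Type*} [AddCommGroup M]
    [Module C M] (f : A →ₗ[C] M) (hf : Function.Surjective f) {N : ℕ}
    (hN : ∀ a ∈ maximalIdeal A ^ N, f a = 0) : Module.Finite C M := by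
  obtain ⟨P, hP, hPN⟩ := exists_fg_submodule_forall_sub_mem_pow hres N
  refine ⟨(eq_top_iff.mpr fun x _ => ?_ : P.map f = ⊤) ▸ hP.map f⟩
  obtain ⟨a, rfl⟩ := hf x
  obtain ⟨b, hb, hab⟩ := hPN a
  exact ⟨b, hb, (sub_eq_zero.mp (by rw [← map_sub, hN _ hab])).symm⟩

theorem finite_quotient_of_maximalIdeal_pow_le
    (hres : Function.Surjective ((residue A).comp (algebraMap C A))) (I : Ideal C)
    [IsPrecomplete I C] (hI : I.map (algebraMap C A) ≤ maximalIdeal A) (J : Ideal A) {N : ℕ}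
    (hN : maximalIdeal A ^ N ≤ J ⊔ I.map (algebraMap C A)) : Module.Finite C (A ⧸ J) := by
  have : IsHausdorff I (A ⧸ J) := .of_map hI
  have : Module.Finite C ((A ⧸ J) ⧸ (I • ⊤ : Submodule C (A ⧸ J))) := by
    refine finite_of_surjective_of_maximalIdeal_pow hres (N := N)
      ((Submodule.mkQ _).comp (Ideal.Quotient.mkₐ C J).toLinearMap)
      ((Submodule.mkQ_surjective _).comp Ideal.Quotient.mk_surjective) fun a ha => ?_
    have hmem : Ideal.Quotient.mk J a ∈ I.map (algebraMap C (A ⧸ J)) := by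
      have := Ideal.mem_map_of_mem (Ideal.Quotient.mk J) (hN ha)
      rwa [Ideal.map_sup, Ideal.map_quotient_self, bot_sup_eq, Ideal.map_map] at this
    rw [LinearMap.comp_apply, Submodule.mkQ_apply, Submodule.Quotient.mk_eq_zero,
      Ideal.smul_top_eq_map]
    exact hmem
  exact finite_of_finite_quotient_smul_top I

end FiniteOverCoefficientRing

theorem finite_of_finite_quotient_map {S A : Type*} [CommRing S] [CommRing A] [Algebra S A]
    (I : Ideal S) [IsPrecomplete I S] [IsHausdorff I A]
    [Module.Finite S (A ⧸ I.map (algebraMap S A))] : Module.Finite S A := by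
  have : Module.Finite S (A ⧸ (I • ⊤ : Submodule S A)) := by
    rw [Ideal.smul_top_eq_map]
    exact Module.Finite.equiv
      (Submodule.Quotient.restrictScalarsEquiv S (I.map (algebraMap S A))).symm
  exact finite_of_finite_quotient_smul_top I

theorem ringKrullDim_powerSeries_le (D : Type*) [CommRing D] [IsNoetherianRing D] :
    ringKrullDim (PowerSeries D) ≤ ringKrullDim D + 1 := by
  have hX : (PowerSeries.X : PowerSeries D) ∈ Ring.jacobson (PowerSeries D) := by
    rw [← Ideal.jacobson_bot]
    exact IsAdicComplete.le_jacobson_bot _ (Ideal.mem_span_singleton_self _)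
  have hle := ringKrullDim_le_ringKrullDim_quotient_add_card
    ({PowerSeries.X} : Finset (PowerSeries D)) (by simpa using hX)
  rwa [Finset.card_singleton, Finset.coe_singleton, Nat.cast_one,
    ringKrullDim_eq_of_ringEquiv (powerSeriesQuotientXEquiv D)] at hle

theorem ringKrullDim_mvPowerSeries_le (D : Type*) [CommRing D] [IsNoetherianRing D] (n : ℕ) :
    ringKrullDim (MvPowerSeries (Fin n) D) ≤ ringKrullDim D + n := by
  induction n with
  | zero =>
    rw [ringKrullDim_eq_of_ringEquiv (MvPowerSeries.isEmptyEquiv (Fin 0) D).toRingEquiv]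
    simp
  | succ n ih =>
    rw [ringKrullDim_eq_of_ringEquiv (MvPowerSeries.finSuccEquiv D n).toRingEquiv, Nat.cast_succ,
      ← add_assoc]
    exact (ringKrullDim_powerSeries_le _).trans (by gcongr)

section Integral

variable {S A : Type*} [CommRing S] [CommRing A] [Algebra S A] [Algebra.IsIntegral S A]

variable (S A) in
theorem ringKrullDim_le_of_isIntegral : ringKrullDim A ≤ ringKrullDim S := by
  refine Order.krullDim_le_of_strictMono (PrimeSpectrum.comap (algebraMap S A)) fun p q hpq => ?_
  have := p.2
  exact Ideal.IsIntegral.comap_lt_comap (R := S) hpq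

-- A nonzero kernel would cost one dimension, which an integral extension cannot make up for.
theorem injective_algebraMap_of_ringKrullDim_le [IsDomain S] [FiniteRingKrullDim A]
    (hdim : ringKrullDim S ≤ ringKrullDim A) : Function.Injective (algebraMap S A) := by
  rw [injective_iff_map_eq_zero]
  by_contra! ⟨r, hr, hr0⟩
  have hrange : ringKrullDim (algebraMap S A).range + 1 ≤ ringKrullDim S :=
    ringKrullDim_succ_le_of_surjective (algebraMap S A).rangeRestrict
      (algebraMap S A).rangeRestrict_surjective (mem_nonZeroDivisors_of_ne_zero hr0)
      (Subtype.ext hr)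
  have : Algebra.IsIntegral (algebraMap S A).range A := by
    let : Algebra S (algebraMap S A).range := (algebraMap S A).rangeRestrict.toAlgebra
    have : IsScalarTower S (algebraMap S A).range A := .of_algebraMap_eq fun _ => rfl
    exact Algebra.IsIntegral.tower_top S
  have hlt : ringKrullDim A + 1 ≤ ringKrullDim A := calc
    ringKrullDim A + 1 ≤ ringKrullDim (algebraMap S A).range + 1 := by
      gcongr; exact ringKrullDim_le_of_isIntegral _ A
    _ ≤ ringKrullDim A := hrange.trans hdim
  obtain ⟨d, hd⟩ := WithBot.ne_bot_iff_exists.mp (ringKrullDim_ne_bot (R := A))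
  have hd_top : d ≠ ⊤ := fun h => ringKrullDim_ne_top (R := A) (by rw [← hd, h]; rfl)
  rw [← hd] at hlt
  exact (ENat.add_one_le_iff hd_top).mp (by exact_mod_cast hlt) |>.false

end Integral

section Parameters

theorem exists_parameters (B : Type*) [CommRing B] [IsLocalRing B] [IsNoetherianRing B] :
    ∃ (n : ℕ) (y : Fin n → B) (N : ℕ), (∀ i, y i ∈ maximalIdeal B) ∧
      maximalIdeal B ^ N ≤ Ideal.span (Set.range y) ∧ ringKrullDim B = n := by
  obtain ⟨s, hs, hcard⟩ := (maximalIdeal B).exists_finset_card_eq_height_of_isNoetherianRing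
  have hrad : maximalIdeal B ≤ (Ideal.span (s : Set B)).radical := by
    rw [Ideal.radical_eq_sInf]
    exact le_sInf fun p ⟨hp, hprime⟩ => hs.2 ⟨hprime, hp⟩ (le_maximalIdeal hprime.ne_top)
  obtain ⟨N, hN⟩ := Ideal.exists_pow_le_of_le_radical_of_fg hrad (Ideal.fg_of_isNoetherianRing _)
  refine ⟨s.card, fun i => s.equivFin.symm i, N,
    fun i => hs.1.2 (Ideal.subset_span (s.equivFin.symm i).2), ?_, ?_⟩
  · have hrange : Set.range (fun i => (s.equivFin.symm i : B)) = s :=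
      (s.equivFin.symm.surjective.range_comp _).trans Subtype.range_coe
    rwa [hrange]
  · rw [← maximalIdeal_height_eq_ringKrullDim, ← hcard]
    rfl

theorem exists_parameters_quotient {A : Type*} [CommRing A] [IsLocalRing A] [IsNoetherianRing A]
    {I : Ideal A} (hI : I ≠ ⊤) : ∃ (n : ℕ) (x : Fin n → A) (N : ℕ), (∀ i, x i ∈ maximalIdeal A) ∧
      maximalIdeal A ^ N ≤ Ideal.span (Set.range x) ⊔ I ∧ ringKrullDim (A ⧸ I) = n := by
  have : Nontrivial (A ⧸ I) := Ideal.Quotient.nontrivial_iff.mpr hI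
  have : IsLocalRing (A ⧸ I) := .of_surjective' (Ideal.Quotient.mk _) Ideal.Quotient.mk_surjective
  have hcomap : (maximalIdeal (A ⧸ I)).comap (Ideal.Quotient.mk I) = maximalIdeal A :=
    eq_maximalIdeal (Ideal.comap_isMaximal_of_surjective _ Ideal.Quotient.mk_surjective)
  obtain ⟨n, y, N, hy, hN, hdim⟩ := exists_parameters (A ⧸ I)
  choose x hx using fun i => Ideal.Quotient.mk_surjective (y i)
  refine ⟨n, x, N, fun i => ?_, ?_, hdim⟩
  · rw [← hcomap, Ideal.mem_comap, hx]
    exact hy i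
  · have hmap :
        (Ideal.span (Set.range x)).map (Ideal.Quotient.mk I) = Ideal.span (Set.range y) := by
      rw [Ideal.map_span, ← Set.range_comp]
      exact congrArg (fun z => Ideal.span (Set.range z)) (funext hx)
    rw [sup_comm, ← Ideal.comap_map_quotientMk, ← Ideal.map_le_iff_le_comap, hmap, Ideal.map_pow]
    exact (Ideal.pow_right_mono (Ideal.map_le_iff_le_comap.mpr hcomap.ge) N).trans hN

end Parameters

namespace IsCoefficientRing

theorem isDomain {C A : Type*} [CommRing C] [IsLocalRing C] [CommRing A] [IsLocalRing A]
    [IsDomain A] {φ : C →+* A} (hφ : IsCoefficientRing φ) : IsDomain C :=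
  hφ.injective.isDomain φ

theorem isN2_mvPowerSeries {C : Type u} {A : Type*} [CommRing C] [IsLocalRing C] [CommRing A]
    [IsLocalRing A] [IsDomain A] {φ : C →+* A} (hφ : IsCoefficientRing φ) (n : ℕ) :
    IsN2 (MvPowerSeries (Fin n) C) := by
  have := hφ.isDomain
  have := hφ.isPrincipalIdealRing
  have of_charZero (_ : CharZero C) : IsN2 (MvPowerSeries (Fin n) C) := by
    have : CharZero (MvPowerSeries (Fin n) C) :=
      charZero_of_injective_algebraMap (MvPowerSeries.C_injective (σ := Fin n) (R := C))
    exact isN2_of_charZero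
  rcases hφ.isField_or_charZero with hfield | hzero
  · let := hfield.toField
    obtain ⟨p, hp⟩ := CharP.exists C
    rcases CharP.char_is_prime_or_zero C p with hprime | rfl
    · have : Fact p.Prime := ⟨hprime⟩
      exact _root_.isN2_mvPowerSeries C p n
    · exact of_charZero (CharP.charP_to_charZero C)
  · exact of_charZero hzero

variable {C A : Type*} [CommRing C] [IsLocalRing C] [CommRing A] [IsLocalRing A] {φ : C →+* A}

theorem map_maximalIdeal_le (hφ : IsCoefficientRing φ) :
    (maximalIdeal C).map φ ≤ maximalIdeal A :=
  have := hφ.isLocalHom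
  ((local_hom_TFAE φ).out 0 2).mp this

theorem ringKrullDim_add_ringKrullDim_quotient_le [IsDomain A] (hφ : IsCoefficientRing φ) :
    ringKrullDim C + ringKrullDim (A ⧸ (maximalIdeal C).map φ) ≤ ringKrullDim A := by
  have := hφ.isDomain
  have := hφ.isPrincipalIdealRing
  by_cases hfield : IsField C
  · rw [ringKrullDim_eq_zero_of_isField hfield, zero_add]
    exact ringKrullDim_quotient_le _
  · obtain ⟨π, hπ⟩ := IsPrincipalIdealRing.principal (maximalIdeal C)
    have hπ0 : φ π ≠ 0 := by
      rw [map_ne_zero_iff φ hφ.injective]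
      rintro rfl
      exact hfield (isField_iff_maximalIdeal_eq.mpr (by simpa using hπ))
    rw [IsPrincipalIdealRing.ringKrullDim_eq_one C hfield, hπ, Ideal.submodule_span_eq,
      Ideal.map_span, Set.image_singleton, add_comm]
    exact ringKrullDim_quotient_succ_le_of_nonZeroDivisor (mem_nonZeroDivisors_of_ne_zero hπ0)

end IsCoefficientRing

-- Cohen: a complete local domain is finite over a power series ring over its coefficient ring.
theorem isN2_of_isAdicComplete (A : Type u) [CommRing A] [IsDomain A] [IsLocalRing A]
    [IsNoetherianRing A] [IsAdicComplete (maximalIdeal A) A] : IsN2 A := by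
  obtain ⟨C, _, _, φ, hφ⟩ := exists_isCoefficientRing A
  have := hφ.isDomain
  have := hφ.isPrincipalIdealRing
  have := hφ.isAdicComplete
  obtain ⟨n, x, N, hx, hN, hdim⟩ := exists_parameters_quotient
    (ne_top_of_le_ne_top Ideal.IsPrime.ne_top' hφ.map_maximalIdeal_le)
  obtain ⟨f, hfC, hfX⟩ := exists_mvPowerSeries_ringHom (maximalIdeal A) φ x hx
  let S := MvPowerSeries (Fin n) C
  let : Algebra C A := φ.toAlgebra
  let : Algebra S A := f.toAlgebra
  have : IsScalarTower C S A := .of_algebraMap_eq fun c => (hfC c).symm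
  let I : Ideal S := Ideal.span (Set.range MvPowerSeries.X)
  have hI : I.map (algebraMap S A) = Ideal.span (Set.range x) := by
    rw [Ideal.map_span, ← Set.range_comp]
    exact congrArg (fun z => Ideal.span (Set.range z)) (funext hfX)
  have hIm : I.map (algebraMap S A) ≤ maximalIdeal A := by
    rw [hI, Ideal.span_le]
    exact Set.range_subset_iff.mpr hx
  have : Module.Finite C (A ⧸ I.map (algebraMap S A)) :=
    finite_quotient_of_maximalIdeal_pow_le hφ.surjective_residue (maximalIdeal C)
      hφ.map_maximalIdeal_le _ (hI ▸ hN)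
  have : Module.Finite S (A ⧸ I.map (algebraMap S A)) := .of_restrictScalars_finite C S _
  have : IsHausdorff I A := .of_map hIm
  have : Module.Finite S A := finite_of_finite_quotient_map I
  have hSA : ringKrullDim S ≤ ringKrullDim A := calc
    ringKrullDim S ≤ ringKrullDim C + n := ringKrullDim_mvPowerSeries_le C n
    _ ≤ ringKrullDim A := hdim ▸ hφ.ringKrullDim_add_ringKrullDim_quotient_le
  have : FaithfulSMul S A :=
    (faithfulSMul_iff_algebraMap_injective S A).mpr (injective_algebraMap_of_ringKrullDim_le hSA)
  exact .of_finite (hφ.isN2_mvPowerSeries n)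

theorem isAdicComplete_quotient {A : Type*} [CommRing A] [IsLocalRing A] [IsNoetherianRing A]
    [IsAdicComplete (maximalIdeal A) A] (P : Ideal A) [IsLocalRing (A ⧸ P)] :
    IsAdicComplete (maximalIdeal (A ⧸ P)) (A ⧸ P) := by
  have hmap : (maximalIdeal A).map (algebraMap A (A ⧸ P)) = maximalIdeal (A ⧸ P) := by
    have hsurj : Function.Surjective (algebraMap A (A ⧸ P)) := Ideal.Quotient.mk_surjective
    rw [← eq_maximalIdeal (Ideal.comap_isMaximal_of_surjective (K := maximalIdeal (A ⧸ P)) _ hsurj),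
      Ideal.map_comap_of_surjective _ hsurj]
  have : IsPrecomplete (maximalIdeal A) (A ⧸ P) := by
    rw [← AdicCompletion.of_surjective_iff]
    have hcomp : Function.Surjective
        (AdicCompletion.map (maximalIdeal A) P.mkQ ∘ AdicCompletion.of (maximalIdeal A) A) :=
      (AdicCompletion.map_surjective _ P.mkQ_surjective).comp (AdicCompletion.of_surjective _ _)
    exact Function.Surjective.of_comp (g := P.mkQ) hcomp
  rw [← hmap, IsAdicComplete.map_algebraMap_iff]
  exact { }

theorem finite_integralClosure_quotient {A : Type*} [CommRing A] [IsLocalRing A]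
    [IsNoetherianRing A] [IsAdicComplete (maximalIdeal A) A] (P : Ideal A) [P.IsPrime] :
    Module.Finite A (integralClosure (A ⧸ P) (FractionRing (A ⧸ P))) := by
  have : IsLocalRing (A ⧸ P) := .of_surjective' (Ideal.Quotient.mk _) Ideal.Quotient.mk_surjective
  have := isAdicComplete_quotient P
  have : Module.Finite (A ⧸ P) (integralClosure (A ⧸ P) (FractionRing (A ⧸ P))) :=
    isN2_of_isAdicComplete (A ⧸ P) (FractionRing (A ⧸ P)) _
  exact Module.Finite.trans (A ⧸ P) _

/-! ### Descent of finiteness from the completion -/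

section Descent

variable {R A Q V : Type*} [CommRing R] [CommRing A] [Algebra R A] [Module.FaithfullyFlat R A]
  [CommRing Q] [Algebra R Q] [IsFractionRing R Q] [CommRing V] [Algebra R V] [Algebra A V]
  [IsScalarTower R A V] [FaithfulSMul A V]

-- Clearing denominators turns the relation over `A` into membership in an extended ideal of `R`.
theorem mem_span_of_mem_span_image (ψ : Q →ₐ[R] V) (t : Finset Q) {y : Q}
    (hy : ψ y ∈ Submodule.span A (ψ '' t)) : y ∈ Submodule.span R (t : Set Q) := by
  classical
  obtain ⟨s, hs⟩ :=
    IsLocalization.exist_integer_multiples_of_finset (nonZeroDivisors R) (insert y t)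
  obtain ⟨a, ha⟩ := hs y (Finset.mem_insert_self _ _)
  choose! b hb using fun z (hz : z ∈ t) => hs z (Finset.mem_insert_of_mem hz)
  obtain ⟨c, hc⟩ := (Submodule.mem_span_image_finset_iff_exists_fun' A).mp hy
  have hrel : algebraMap R A a = ∑ z ∈ t, c z * algebraMap R A (b z) := by
    have hψ (r : R) : algebraMap A V (algebraMap R A r) = ψ (algebraMap R Q r) := by
      rw [← IsScalarTower.algebraMap_apply, AlgHom.commutes]
    apply FaithfulSMul.algebraMap_injective A V
    rw [hψ, ha, map_smul, ← hc, Finset.smul_sum, map_sum]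
    refine Finset.sum_congr rfl fun z hz => ?_
    rw [map_mul, hψ, hb z hz, map_smul, ← Algebra.smul_def, smul_comm]
  have hmem : a ∈ Ideal.span (b '' t) := by
    rw [← Ideal.comap_map_eq_self_of_faithfullyFlat (B := A) (Ideal.span (b '' t)),
      Ideal.mem_comap, hrel]
    exact Ideal.sum_mem _ fun z hz => Ideal.mul_mem_left _ _
      (Ideal.mem_map_of_mem _ (Ideal.subset_span ⟨z, hz, rfl⟩))
  obtain ⟨d, hd⟩ := (Submodule.mem_span_image_finset_iff_exists_fun' R).mp hmem
  have hy_eq : y = ∑ z ∈ t, d z • z := by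
    apply (IsLocalization.map_units Q s).mul_left_cancel
    rw [← Algebra.smul_def, ← Algebra.smul_def, ← ha, ← hd, map_sum, Finset.smul_sum]
    refine Finset.sum_congr rfl fun z hz => ?_
    rw [smul_comm, ← hb z hz, smul_eq_mul, map_mul, Algebra.smul_def]
  rw [hy_eq]
  exact Submodule.sum_mem _ fun z hz => Submodule.smul_mem _ _ (Submodule.subset_span hz)

theorem fg_of_map_le_isNoetherian (ψ : Q →ₐ[R] V) (W : Submodule A V) [IsNoetherian A W]
    (N : Submodule R Q) (hN : ∀ y ∈ N, ψ y ∈ W) : N.FG := by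
  classical
  have hfg : (Submodule.span A (ψ '' N)).FG :=
    .of_le_of_isNoetherian (T := W) (Submodule.span_le.mpr (Set.image_subset_iff.mpr hN))
  obtain ⟨t', ht'N, ht'⟩ := Submodule.fg_span_iff_fg_span_finset_subset _ |>.mp hfg
  obtain ⟨t, htN, rfl⟩ := Finset.subset_set_image_iff.mp ht'N
  refine ⟨t, le_antisymm (Submodule.span_le.mpr htN) fun y hy => ?_⟩
  refine mem_span_of_mem_span_image (A := A) ψ t ?_
  rw [← Finset.coe_image, ← ht']
  exact Submodule.subset_span ⟨y, hy, rfl⟩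

end Descent

/-- The product of the fraction fields of the irreducible components of `Spec A`; for reduced
Noetherian `A` this is its total ring of fractions. -/
abbrev ProdFractionFields (A : Type*) [CommRing A] : Type _ :=
  ∀ P : minimalPrimes A, FractionRing (A ⧸ (P : Ideal A))

section ProdFractionFields

variable {A : Type*} [CommRing A]

instance isPrime_minimalPrimes (P : minimalPrimes A) : (P : Ideal A).IsPrime :=
  P.2.1.1

theorem algebraMap_prodFractionFields_apply_eq_zero {a : A} {P : minimalPrimes A} :
    algebraMap A (ProdFractionFields A) a P = 0 ↔ a ∈ (P : Ideal A) := by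
  change algebraMap (A ⧸ (P : Ideal A)) (FractionRing (A ⧸ (P : Ideal A)))
    (Ideal.Quotient.mk _ a) = 0 ↔ _
  rw [map_eq_zero_iff _ (IsFractionRing.injective _ _), Ideal.Quotient.eq_zero_iff_mem]

instance faithfulSMul_prodFractionFields [IsReduced A] : FaithfulSMul A (ProdFractionFields A) := by
  rw [faithfulSMul_iff_algebraMap_injective, injective_iff_map_eq_zero]
  intro a ha
  have hmem : a ∈ nilradical A := by
    rw [nilradical, ← Ideal.sInf_minimalPrimes, Submodule.mem_sInf]
    exact fun P hP => algebraMap_prodFractionFields_apply_eq_zero.mp (congrFun ha ⟨P, hP⟩)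
  rwa [nilradical_eq_zero, Ideal.zero_eq_bot, Ideal.mem_bot] at hmem

theorem isUnit_algebraMap_prodFractionFields {a : A} (ha : a ∈ nonZeroDivisors A) :
    IsUnit (algebraMap A (ProdFractionFields A) a) := by
  refine Pi.isUnit_iff.mpr fun P => isUnit_iff_ne_zero.mpr fun h => ?_
  exact Set.disjoint_left.mp (Ideal.disjoint_nonZeroDivisors_of_mem_minimalPrimes P.2)
    (algebraMap_prodFractionFields_apply_eq_zero.mp h) ha

end ProdFractionFields

section FiniteIntegralClosure

theorem algebraMap_mem_nonZeroDivisors_of_flat {R A : Type*} [CommRing R] [CommRing A]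
    [Algebra R A] [Module.Flat R A] {r : R} (hr : r ∈ nonZeroDivisors R) :
    algebraMap R A r ∈ nonZeroDivisors A := by
  have hreg : IsSMulRegular A r := Module.Flat.isSMulRegular_of_nonZeroDivisors hr
  refine mem_nonZeroDivisors_iff_left.mpr fun x hx => hreg ?_
  simpa only [Algebra.smul_def, mul_zero] using hx

theorem finite_integralClosure_of_faithfullyFlat (R A Q : Type*) [CommRing R] [CommRing A]
    [Algebra R A] [Module.FaithfullyFlat R A] [IsNoetherianRing A] [IsReduced A] [CommRing Q]
    [Algebra R Q] [IsFractionRing R Q]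
    (hA : ∀ P : minimalPrimes A, Module.Finite A
      (integralClosure (A ⧸ (P : Ideal A)) (FractionRing (A ⧸ (P : Ideal A))))) :
    Module.Finite R (integralClosure R Q) := by
  have : Finite (minimalPrimes A) := minimalPrimes.finite_of_isNoetherianRing A
  have hunit (s : nonZeroDivisors R) : IsUnit (Algebra.ofId R (ProdFractionFields A) s) :=
    isUnit_algebraMap_prodFractionFields (algebraMap_mem_nonZeroDivisors_of_flat s.2)
  let ψ : Q →ₐ[R] ProdFractionFields A := IsLocalization.liftAlgHom hunit
  let j : (∀ P : minimalPrimes A, integralClosure (A ⧸ (P : Ideal A))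
      (FractionRing (A ⧸ (P : Ideal A)))) →ₗ[A] ProdFractionFields A :=
    LinearMap.pi fun P =>
      ((integralClosure (A ⧸ (P : Ideal A)) _).val.toLinearMap.restrictScalars A).comp
        (LinearMap.proj P)
  refine Module.Finite.iff_fg.mpr (fg_of_map_le_isNoetherian ψ (LinearMap.range j)
    (Subalgebra.toSubmodule (integralClosure R Q)) fun y hy => ?_)
  have hint (P : minimalPrimes A) : IsIntegral (A ⧸ (P : Ideal A)) (ψ y P) :=
    ((hy.map ψ).map (Pi.evalAlgHom R _ P)).tower_top
  exact ⟨fun P => ⟨ψ y P, hint P⟩, rfl⟩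

theorem finite_integralClosure_of_isReduced_adicCompletion (R : Type*) [CommRing R]
    [IsLocalRing R] [IsNoetherianRing R] [IsReduced (AdicCompletion (maximalIdeal R) R)] :
    Module.Finite R (integralClosure R (FractionRing R)) := by
  have := isNoetherianRing_adicCompletion_maximalIdeal R
  have : Module.FaithfullyFlat R (AdicCompletion (maximalIdeal R) R) := .of_flat_of_isLocalHom
  exact finite_integralClosure_of_faithfullyFlat R (AdicCompletion (maximalIdeal R) R) _
    fun P => finite_integralClosure_quotient P.1

end FiniteIntegralClosure

/-! ### Reflexivity of the integral closure -/

section Reflexive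

theorem isIntegral_of_mul_mem_submodule {R A : Type*} [CommRing R] [IsNoetherianRing R]
    [CommRing A] [Algebra R A] {c : Submodule R A} (hc : c.FG) {q z : A}
    (hq : ∀ x ∈ c, q * x ∈ c) (hz : z ∈ c) (hz_reg : z ∈ nonZeroDivisors A) : IsIntegral R q := by
  have := isNoetherian_of_fg_of_noetherian c hc
  have hmem (y : Algebra.adjoin R {q}) : (y : A) * z ∈ c := by
    obtain ⟨p, hp⟩ := (Algebra.adjoin_singleton_eq_range_aeval R q).le y.2
    rw [← hp]
    exact Polynomial.aeval_apply_smul_mem_of_le_comap' hz p q hq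
  let mulz : Algebra.adjoin R {q} →ₗ[R] c :=
    ((LinearMap.mulRight R z).comp (Subalgebra.val _).toLinearMap).codRestrict c hmem
  have hinj : Function.Injective mulz := fun x y hxy =>
    Subtype.ext ((mul_cancel_right_mem_nonZeroDivisors hz_reg).mp (congrArg Subtype.val hxy))
  exact isIntegral_of_submodule_noetherian _ (isNoetherian_of_injective mulz hinj) q
    (Algebra.self_mem_adjoin_singleton R q)

variable {R Q : Type*} [CommRing R] [CommRing Q] [Algebra R Q] [IsFractionRing R Q]
  {B : Subalgebra R Q}

theorem algebraMap_dual_apply (g : Module.Dual R B) (x : B) :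
    algebraMap R Q (g x) = x * algebraMap R Q (g 1) := by
  obtain ⟨⟨a, s⟩, hx⟩ := IsLocalization.surj (nonZeroDivisors R) (x : Q)
  have hsx : (s : R) • x = a • (1 : B) := by
    ext
    simpa [Algebra.smul_def, mul_comm] using hx
  apply (IsLocalization.map_units Q s).mul_left_cancel
  have hg := congrArg (algebraMap R Q) (congrArg g hsx)
  simp only [map_smul, smul_eq_mul, map_mul] at hg
  rw [hg, ← mul_assoc, mul_comm _ (x : Q), hx]

variable (B) in
theorem exists_dual_eq_mul_nonZeroDivisor [Module.Finite R B] :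
    ∃ (s : nonZeroDivisors R) (μ : Module.Dual R B),
      ∀ x, algebraMap R Q (μ x) = algebraMap R Q s * x := by
  obtain ⟨s, hs, hsB⟩ := FractionalIdeal.isFractional_of_fg (S := nonZeroDivisors R)
    (I := Subalgebra.toSubmodule B) (Module.Finite.iff_fg.mp inferInstance)
  choose m hm using fun x : B => hsB x x.2
  have hinj : Function.Injective (algebraMap R Q) := IsFractionRing.injective R Q
  let μ : Module.Dual R B :=
    { toFun := m
      map_add' := fun x y => hinj (by simp only [map_add, hm, Subalgebra.coe_add, smul_add])
      map_smul' := fun r x => hinj (by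
        rw [RingHom.id_apply, smul_eq_mul, map_mul, hm, hm, SetLike.val_smul, smul_comm,
          Algebra.smul_def r]) }
  exact ⟨⟨s, hs⟩, μ, fun x => (hm x).trans (Algebra.smul_def s (x : Q))⟩

theorem exists_algebraMap_bidual_apply [Module.Finite R B] (Φ : Module.Dual R (Module.Dual R B)) :
    ∃ q : Q, ∀ g, algebraMap R Q (Φ g) = q * algebraMap R Q (g 1) := by
  obtain ⟨s, μ, hμ⟩ := exists_dual_eq_mul_nonZeroDivisor B
  obtain ⟨q, hq⟩ := (IsLocalization.map_units Q s).dvd (a := algebraMap R Q (Φ μ))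
  refine ⟨q, fun g => (IsLocalization.map_units Q s).mul_left_cancel ?_⟩
  have hsg : (s : R) • g = g 1 • μ := by
    ext x
    apply IsFractionRing.injective R Q
    simp only [LinearMap.smul_apply, smul_eq_mul, map_mul]
    rw [algebraMap_dual_apply g x, hμ]
    ring
  have hΦ := congrArg (algebraMap R Q) (congrArg Φ hsg)
  simp only [map_smul, smul_eq_mul, map_mul] at hΦ
  rw [hΦ, hq]
  ring

-- `q` stabilises the conductor `{g 1 | g : B → R}`, a finite module containing a nonzerodivisor.
theorem isIntegral_of_algebraMap_bidual_apply [IsNoetherianRing R] [Module.Finite R B]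
    {Φ : Module.Dual R (Module.Dual R B)} {q : Q}
    (hΦ : ∀ g, algebraMap R Q (Φ g) = q * algebraMap R Q (g 1)) : IsIntegral R q := by
  obtain ⟨s, μ, hμ⟩ := exists_dual_eq_mul_nonZeroDivisor B
  let conductor : Submodule R Q :=
    LinearMap.range ((Algebra.linearMap R Q).comp (LinearMap.applyₗ (1 : B) : _ →ₗ[R] R))
  have hfg : conductor.FG := Module.Finite.iff_fg.mp (Module.Finite.range _)
  have hstable : ∀ x ∈ conductor, q * x ∈ conductor := by
    rintro _ ⟨g, rfl⟩
    refine ⟨Φ.comp ((LinearMap.mul R B).compr₂ g), ?_⟩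
    simp [hΦ]
  refine isIntegral_of_mul_mem_submodule hfg hstable ⟨μ, hμ 1⟩ ?_
  simpa using (IsLocalization.map_units Q s).mem_nonZeroDivisors

theorem isReflexive_integralClosure [IsNoetherianRing R] [Module.Finite R (integralClosure R Q)] :
    Module.IsReflexive R (integralClosure R Q) := by
  have hinj : Function.Injective (algebraMap R Q) := IsFractionRing.injective R Q
  refine ⟨(injective_iff_map_eq_zero _).mpr fun x hx => ?_, fun Φ => ?_⟩
  · obtain ⟨s, μ, hμ⟩ := exists_dual_eq_mul_nonZeroDivisor (integralClosure R Q)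
    have hμx : μ x = 0 := LinearMap.congr_fun hx μ
    refine Subtype.ext ((IsLocalization.map_units Q s).mul_left_cancel ?_)
    rw [← hμ, hμx, map_zero, ZeroMemClass.coe_zero, mul_zero]
  · obtain ⟨q, hq⟩ := exists_algebraMap_bidual_apply Φ
    refine ⟨⟨q, isIntegral_of_algebraMap_bidual_apply hq⟩, LinearMap.ext fun g => hinj ?_⟩
    rw [hq, Module.Dual.eval_apply, algebraMap_dual_apply]

end Reflexive

theorem stmt5_general (R : Type*) [CommRing R] [IsLocalRing R] [IsNoetherianRing R]
    [IsReduced (AdicCompletion (maximalIdeal R) R)] :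
    Module.IsReflexive R (integralClosure R (FractionRing R)) :=
  have := finite_integralClosure_of_isReduced_adicCompletion R
  isReflexive_integralClosure

-- STATEMENT 5
theorem stmt5 (R : Type) [CommRing R] [IsLocalRing R] [IsNoetherianRing R]
    (hau : AnalyticallyUnramified R) (hS2 : SerreS2 R) :
    Module.IsReflexive R (IntClosure R) := by
  have : IsReduced (AdicCompletion (maximalIdeal R) R) := hau
  exact stmt5_general R
end
end

section
/- Let (R, m) be a 2-dimensional analytically unramified Noetherian local ring satisfying Serre's condition (R1) (R_p is regular for every prime p of height ≤ 1) and with m · H^1_m(R) = 0 (e.g. R Buchsbaum). If the first Bass number μ^1(m, R) := dim_{R/m} Ext^1_R(R/m, R) satisfies μ^1(m, R) ≤ 1, then the integral closure R̄ of R in its total ring of fractions is a reflexive R-module. -/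
open CategoryTheory IsLocalRing

set_option synthInstance.maxHeartbeats 1000000
set_option maxHeartbeats 1000000

noncomputable section

/-!
Write `(A : B) = {f ∈ K | f B ⊆ A}` in the total ring of fractions `K` of `R`, and let `I` be an
ideal containing a nonzerodivisor. Sending `f` to the image of multiplication by `f` under
`Hom(I, R) ⟶ Ext¹(R/I, R)` embeds `(R : I)/R` into `Ext¹(R/I, R)`, compatibly with shrinking `I`.
* Every non-maximal prime has a localization which is a field or a discrete valuation ring, so the
  denominator ideal of an integral `f ∈ K` lies in no such prime, and `f ∈ (R : 𝔪ⁿ)` for some `n`.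
  The class of `f` in `colim Ext¹(R/𝔪ⁿ, R) = H¹_𝔪(R)` is killed by `𝔪`, hence `𝔪 f ⊆ R`. Thus
  `R̄ ⊆ (R : 𝔪)`.
* `(R : 𝔪)/R` embeds into `Ext¹(R/𝔪, R)`, a vector space of dimension at most one, so either
  `R̄ = R` or `R̄ = (R : 𝔪)`.

Finally `Hom(N, R) = (R : N)` for `N ⊆ K` containing a unit of `K`, so that `(R : 𝔪)` is reflexive
because `(R : (R : (R : 𝔪))) = (R : 𝔪)`.
-/

universe u v

section Cochains

open HomologicalComplex

variable {R : Type u} [CommRing R] {C : Type*} [Category.{v} C] [Abelian C] [Linear R C]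
  {A B : ChainComplex C ℕ} {Y : C} {n : ℕ}

variable (R) in
/-- The map of cochain complexes `Hom(B, Y) ⟶ Hom(A, Y)` induced by a chain map `g : A ⟶ B`. -/
def linearYonedaMap (g : A ⟶ B) (Y : C) : B.linearYonedaObj R Y ⟶ A.linearYonedaObj R Y :=
  (HomologicalComplex.unopFunctor _ _).map
    ((((linearYoneda R C).obj Y).rightOp.mapHomologicalComplex _).map g).op

variable (R A Y n) in
/-- The `n`-cocycles of `Hom(A, Y)`, as honest morphisms `A.X n ⟶ Y`. -/
def homCocycles : Submodule R (A.X n ⟶ Y) :=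
  LinearMap.ker (Linear.leftComp R Y (A.d (n + 1) n))

variable (R Y n) in
/-- Precomposition of cocycles with a chain map. -/
def homCocyclesMap (g : A ⟶ B) : homCocycles R B Y n →ₗ[R] homCocycles R A Y n :=
  (Linear.leftComp R Y (g.f n)).restrict fun k (hk : B.d (n + 1) n ≫ k = 0) =>
    show A.d (n + 1) n ≫ g.f n ≫ k = 0 by rw [← g.comm_assoc, hk, Limits.comp_zero]

variable (R A Y n) in
/-- The identification of `homCocycles` with the abstract cycles of `A.linearYonedaObj R Y`. -/
def homCocyclesToCycles :
    ModuleCat.of R (homCocycles R A Y n) ⟶ (A.linearYonedaObj R Y).cycles n :=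
  (A.linearYonedaObj R Y).liftCycles (i := n) (ModuleCat.ofHom (homCocycles R A Y n).subtype)
    (n + 1) (by simp) (by ext k; exact k.2)

lemma iCycles_homCocyclesToCycles (k : homCocycles R A Y n) :
    (A.linearYonedaObj R Y).iCycles n (homCocyclesToCycles R A Y n k) = k.1 :=
  ConcreteCategory.congr_hom ((A.linearYonedaObj R Y).liftCycles_i
    (ModuleCat.ofHom (homCocycles R A Y n).subtype) (n + 1) (by simp) (by ext k; exact k.2)) k

lemma iCycles_linearYonedaObj_injective :
    Function.Injective ((A.linearYonedaObj R Y).iCycles n) :=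
  (ModuleCat.mono_iff_injective _).1 inferInstance

lemma homCocyclesToCycles_surjective : Function.Surjective (homCocyclesToCycles R A Y n) := by
  intro z
  let k : homCocycles R A Y n := ⟨(A.linearYonedaObj R Y).iCycles n z,
    ConcreteCategory.congr_hom ((A.linearYonedaObj R Y).iCycles_d n (n + 1)) z⟩
  exact ⟨k, iCycles_linearYonedaObj_injective (iCycles_homCocyclesToCycles k)⟩

variable (R A Y n) in
/-- The cohomology class of a cocycle of `Hom(A, Y)`. -/
def homCocycleClass : homCocycles R A Y n →ₗ[R] (A.linearYonedaObj R Y).homology n :=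
  (homCocyclesToCycles R A Y n ≫ (A.linearYonedaObj R Y).homologyπ n).hom

lemma homCocycleClass_surjective : Function.Surjective (homCocycleClass R A Y n) :=
  ((ModuleCat.epi_iff_surjective ((A.linearYonedaObj R Y).homologyπ n)).1 inferInstance).comp
    homCocyclesToCycles_surjective

lemma homCocycleClass_eq_zero_iff (k : homCocycles R A Y (n + 1)) :
    homCocycleClass R A Y (n + 1) k = 0 ↔ ∃ ψ : A.X n ⟶ Y, A.d (n + 1) n ≫ ψ = k := by
  let K := A.linearYonedaObj R Y
  have exact_homology : (ShortComplex.mk _ _ (K.toCycles_comp_homologyπ n (n + 1))).Exact :=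
    ShortComplex.exact_of_g_is_cokernel _ (K.homologyIsCokernel n (n + 1) (by simp))
  have iCycles_toCycles (ψ : A.X n ⟶ Y) :
      K.iCycles (n + 1) (K.toCycles n (n + 1) ψ) = A.d (n + 1) n ≫ ψ :=
    ConcreteCategory.congr_hom (K.toCycles_i n (n + 1)) ψ
  have toCycles_eq_iff (ψ : A.X n ⟶ Y) :
      K.toCycles n (n + 1) ψ = homCocyclesToCycles R A Y (n + 1) k ↔ A.d (n + 1) n ≫ ψ = k := by
    rw [← iCycles_linearYonedaObj_injective.eq_iff, iCycles_toCycles, iCycles_homCocyclesToCycles]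
    rfl
  exact ((ShortComplex.ShortExact.moduleCat_exact_iff_function_exact _).1 exact_homology _).trans
    (exists_congr toCycles_eq_iff)

lemma homologyMap_homCocycleClass (g : A ⟶ B) (k : homCocycles R B Y n) :
    homologyMap (linearYonedaMap R g Y) n (homCocycleClass R B Y n k) =
      homCocycleClass R A Y n (homCocyclesMap R Y n g k) := by
  have cyclesMap_k : cyclesMap (linearYonedaMap R g Y) n (homCocyclesToCycles R B Y n k) =
      homCocyclesToCycles R A Y n (homCocyclesMap R Y n g k) := by
    apply iCycles_linearYonedaObj_injective
    rw [iCycles_homCocyclesToCycles]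
    exact (ConcreteCategory.congr_hom (cyclesMap_i (linearYonedaMap R g Y) n) _).trans
      (congrArg (g.f n ≫ ·) (iCycles_homCocyclesToCycles k))
  exact (ConcreteCategory.congr_hom (homologyπ_naturality (linearYonedaMap R g Y) n)
    (homCocyclesToCycles R B Y n k)).trans
      (congrArg ((A.linearYonedaObj R Y).homologyπ n) cyclesMap_k)

end Cochains

section Augmentation

variable {C : Type*} [Category.{v} C] [Abelian C] {X X' : C}

/-- The end `P₁ ⟶ P₀ ⟶ X` of a projective resolution of `X`. -/
abbrev augmentation (P : ProjectiveResolution X) : ShortComplex C where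
  X₃ := X
  f := P.complex.d 1 0
  g := P.π.f 0
  zero := P.complex_d_comp_π_f_zero

lemma augmentation_exact (P : ProjectiveResolution X) : (augmentation P).Exact := P.exact₀

instance (P : ProjectiveResolution X) : Epi (augmentation P).g :=
  inferInstanceAs (Epi (P.π.f 0))

/-- The map of augmentations given by a chain map lifting `f`. -/
abbrev augmentationMap {P : ProjectiveResolution X} {P' : ProjectiveResolution X'} {f : X ⟶ X'}
    {g : P.complex ⟶ P'.complex} (comm : g.f 0 ≫ (augmentation P').g = (augmentation P).g ≫ f) :
    augmentation P ⟶ augmentation P' where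
  τ₁ := g.f 1
  τ₂ := g.f 0
  τ₃ := f
  comm₁₂ := g.comm 1 0
  comm₂₃ := comm

lemma exists_augmentation_hom {S : ShortComplex C} (hS : S.ShortExact)
    (P : ProjectiveResolution S.X₃) : ∃ α : augmentation P ⟶ S, α.τ₃ = 𝟙 S.X₃ := by
  have := hS.epi_g
  have := hS.mono_f
  let σ : P.complex.X 0 ⟶ S.X₂ := Projective.factorThru (augmentation P).g S.g
  have hσ : σ ≫ S.g = (augmentation P).g := Projective.factorThru_comp ..
  have zero : ((augmentation P).f ≫ σ) ≫ S.g = 0 := by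
    rw [Category.assoc, hσ, (augmentation P).zero]
  exact ⟨⟨hS.exact.lift _ zero, σ, 𝟙 _, hS.exact.lift_f _ _,
    hσ.trans (Category.comp_id _).symm⟩, rfl⟩

end Augmentation

section ExtCocycles

variable {R : Type u} [CommRing R] {C : Type*} [Category.{v} C] [Abelian C] [Linear R C]
  [EnoughProjectives C] {X X' Y : C} {n : ℕ}

variable (R) in
/-- The `R`-module `Ext^n(X, Y)`. -/
abbrev ExtObj (X Y : C) (n : ℕ) : ModuleCat R :=
  ((Ext R C n).obj (Opposite.op X)).obj Y

variable (R) in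
/-- The contravariant functoriality of `Ext^n(-, Y)`. -/
def extPullback (f : X ⟶ X') (Y : C) (n : ℕ) : ExtObj R X' Y n →ₗ[R] ExtObj R X Y n :=
  (((Ext R C n).map f.op).app Y).hom

lemma isoExt_inv_naturality {f : X ⟶ X'} {P : ProjectiveResolution X}
    {Q : ProjectiveResolution X'} {g : P.complex ⟶ Q.complex}
    (comm : g.f 0 ≫ (augmentation Q).g = (augmentation P).g ≫ f) (Y : C) (n : ℕ) :
    (Q.isoExt n Y).inv ≫ ((Ext R C n).map f.op).app Y =
      HomologicalComplex.homologyMap (linearYonedaMap R g Y) n ≫ (P.isoExt n Y).inv := by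
  let F := ((linearYoneda R C).obj Y).rightOp
  let H := F.mapHomologicalComplex (ComplexShape.down ℕ) ⋙
    HomologicalComplex.homologyFunctor _ _ n
  let unopP := (HomologicalComplex.homologyUnop ((F.mapHomologicalComplex _).obj P.complex) n).hom
  let unopQ := (HomologicalComplex.homologyUnop ((F.mapHomologicalComplex _).obj Q.complex) n).hom
  have naturality_leftDerived :
      (Q.isoLeftDerivedObj F n).hom.unop ≫ ((F.leftDerived n).map f).unop =
        (H.map g).unop ≫ (P.isoLeftDerivedObj F n).hom.unop :=
    congrArg Quiver.Hom.unop
      (ProjectiveResolution.isoLeftDerivedObj_hom_naturality f P Q g comm F n)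
  have naturality_unop : unopQ ≫ (H.map g).unop =
      HomologicalComplex.homologyMap (linearYonedaMap R g Y) n ≫ unopP :=
    congrArg Quiver.Hom.unop
      (HomologicalComplex.homologyOp_hom_naturality (linearYonedaMap R g Y) n)
  exact (Category.assoc _ _ _).trans <| (congrArg (unopQ ≫ ·) naturality_leftDerived).trans <|
    (Category.assoc _ _ _).symm.trans <|
      (congrArg (· ≫ (P.isoLeftDerivedObj F n).hom.unop) naturality_unop).trans
        (Category.assoc _ _ _)

variable (R) in
/-- The class in `Ext^n(X, Y)` of an `n`-cocycle on a projective resolution of `X`. -/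
def extCocycleClass (P : ProjectiveResolution X) (Y : C) (n : ℕ) :
    homCocycles R P.complex Y n →ₗ[R] ExtObj R X Y n :=
  (P.isoExt n Y).inv.hom ∘ₗ homCocycleClass R P.complex Y n

lemma extCocycleClass_surjective (P : ProjectiveResolution X) :
    Function.Surjective (extCocycleClass R P Y n) :=
  (P.isoExt n Y).toLinearEquiv.symm.surjective.comp homCocycleClass_surjective

lemma extCocycleClass_eq_zero_iff {P : ProjectiveResolution X}
    (k : homCocycles R P.complex Y (n + 1)) :
    extCocycleClass R P Y (n + 1) k = 0 ↔
      ∃ ψ : P.complex.X n ⟶ Y, P.complex.d (n + 1) n ≫ ψ = k :=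
  ((P.isoExt (n + 1) Y).toLinearEquiv.symm.map_eq_zero_iff
    (x := homCocycleClass R P.complex Y (n + 1) k)).trans (homCocycleClass_eq_zero_iff k)

lemma extPullback_extCocycleClass {f : X ⟶ X'} {P : ProjectiveResolution X}
    {Q : ProjectiveResolution X'} {g : P.complex ⟶ Q.complex}
    (comm : g.f 0 ≫ (augmentation Q).g = (augmentation P).g ≫ f)
    (k : homCocycles R Q.complex Y n) :
    extPullback R f Y n (extCocycleClass R Q Y n k) =
      extCocycleClass R P Y n (homCocyclesMap R Y n g k) :=
  (ConcreteCategory.congr_hom (isoExt_inv_naturality comm Y n) _).trans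
    (congrArg (P.isoExt n Y).inv (homologyMap_homCocycleClass g k))

/- Both `a • 𝟙` and `0` are lifts of `a • 𝟙 X = 0` to a projective resolution, so they induce the
same map on `Ext`. -/
lemma smul_ext_eq_zero {a : R} (h : a • 𝟙 X = 0) (x : ExtObj R X Y n) : a • x = 0 := by
  let P := projectiveResolution X
  obtain ⟨k, rfl⟩ := extCocycleClass_surjective P x
  have comm_smul : (a • 𝟙 P.complex : P.complex ⟶ P.complex).f 0 ≫ (augmentation P).g =
      (augmentation P).g ≫ (0 : X ⟶ X) := by
    rw [← h, Linear.comp_smul, Category.comp_id, HomologicalComplex.smul_f_apply,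
      HomologicalComplex.id_f, Linear.smul_comp, Category.id_comp]
  have comm_zero : (0 : P.complex ⟶ P.complex).f 0 ≫ (augmentation P).g =
      (augmentation P).g ≫ (0 : X ⟶ X) :=
    Limits.zero_comp.trans Limits.comp_zero.symm
  have map_smul_id : homCocyclesMap R Y n (a • 𝟙 P.complex) k = a • k :=
    Subtype.ext (by simp [homCocyclesMap])
  have map_zero' : homCocyclesMap R Y n (0 : P.complex ⟶ P.complex) k = 0 :=
    Subtype.ext (by simp [homCocyclesMap])
  rw [← map_smul, ← map_smul_id, ← extPullback_extCocycleClass comm_smul,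
    extPullback_extCocycleClass comm_zero, map_zero', map_zero]

end ExtCocycles

section Connecting

variable {C : Type*} [Category.{v} C] [Abelian C] {T S : ShortComplex C}

lemma exists_τ₁_sub_eq_comp {α β : T ⟶ S} (hS : S.ShortExact) (h : α.τ₃ = β.τ₃) :
    ∃ t : T.X₂ ⟶ S.X₁, α.τ₁ - β.τ₁ = T.f ≫ t := by
  have := hS.mono_f
  have sub_comp_g : (α.τ₂ - β.τ₂) ≫ S.g = 0 := by
    rw [Preadditive.sub_comp, α.comm₂₃, β.comm₂₃, h, sub_self]
  refine ⟨hS.exact.lift _ sub_comp_g, ?_⟩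
  rw [← cancel_mono S.f, Category.assoc, hS.exact.lift_f, Preadditive.sub_comp,
    Preadditive.comp_sub, α.comm₁₂, β.comm₁₂]

/-- The total complex `T₁ ⟶ T₂ ⊞ S₁ ⟶ S₂` of the left square of `α : T ⟶ S`; it is right exact
exactly when this square is a pushout. -/
abbrev leftSquareComplex (α : T ⟶ S) : ShortComplex C where
  f := Limits.biprod.lift T.f (-α.τ₁)
  g := Limits.biprod.desc α.τ₂ S.f
  zero := by rw [Limits.biprod.lift_desc, Preadditive.neg_comp, α.comm₁₂, add_neg_cancel]

lemma leftSquareComplex_exact (α : T ⟶ S) [Mono α.τ₃] [Mono S.f] (hT : T.Exact) :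
    (leftSquareComplex α).Exact := by
  rw [ShortComplex.exact_iff_exact_up_to_refinements]
  intro A x hx
  set y := x ≫ Limits.biprod.fst with hy
  set z := x ≫ Limits.biprod.snd with hz
  have sum_eq_zero : y ≫ α.τ₂ + z ≫ S.f = 0 := by
    simpa [Limits.biprod.desc_eq, hy, hz] using hx
  have y_comp_g : y ≫ T.g = 0 := by
    rw [← cancel_mono α.τ₃]
    simpa [α.comm₂₃] using sum_eq_zero =≫ S.g
  obtain ⟨A', π, hπ, r, hr⟩ := hT.exact_up_to_refinements y y_comp_g
  have z_eq : π ≫ z = r ≫ (-α.τ₁) := by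
    rw [← cancel_mono S.f, Category.assoc, eq_neg_of_add_eq_zero_right sum_eq_zero]
    simp [reassoc_of% hr, α.comm₁₂]
  refine ⟨A', π, hπ, r, Limits.biprod.hom_ext _ _ ?_ ?_⟩
  · simpa [hy] using hr
  · simpa [hz] using z_eq

lemma leftSquareComplex_epi (α : T ⟶ S) [Epi α.τ₃] [Epi S.g] [Epi T.g] (hS : S.Exact) :
    Epi (leftSquareComplex α).g := by
  refine Preadditive.epi_of_cancel_zero _ fun h hh => ?_
  have τ₂_comp : α.τ₂ ≫ h = 0 := by simpa using Limits.biprod.inl ≫= hh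
  have f_comp : S.f ≫ h = 0 := by simpa using Limits.biprod.inr ≫= hh
  have desc_eq_zero : hS.desc h f_comp = 0 := by
    rw [← cancel_epi α.τ₃, ← cancel_epi T.g, ← α.comm₂₃_assoc, hS.g_desc, τ₂_comp,
      Limits.comp_zero, Limits.comp_zero]
  rw [← hS.g_desc h f_comp, desc_eq_zero, Limits.comp_zero]

lemma exists_extension_of_comp_eq (α : T ⟶ S) [IsIso α.τ₃] [Epi T.g] (hT : T.Exact)
    (hS : S.ShortExact) {Y : C} {φ : S.X₁ ⟶ Y} {ψ : T.X₂ ⟶ Y} (h : T.f ≫ ψ = α.τ₁ ≫ φ) :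
    ∃ χ : S.X₂ ⟶ Y, S.f ≫ χ = φ := by
  have := hS.mono_f
  have := hS.epi_g
  have := leftSquareComplex_epi α hS.exact
  have zero : (leftSquareComplex α).f ≫ Limits.biprod.desc ψ φ = 0 := by simp [h]
  refine ⟨(leftSquareComplex_exact α hT).desc _ zero, ?_⟩
  simpa using Limits.biprod.inr ≫= (leftSquareComplex_exact α hT).g_desc _ zero

variable [EnoughProjectives C] {S' : ShortComplex C} (hS : S.ShortExact) (hS' : S'.ShortExact)

/-- A lift of the identity of `S.X₃` to a map from the augmentation of its projective resolution
to the short exact sequence `S`. -/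
def augmentationHom : augmentation (projectiveResolution S.X₃) ⟶ S :=
  (exists_augmentation_hom hS _).choose

lemma augmentationHom_τ₃ : (augmentationHom hS).τ₃ = 𝟙 S.X₃ :=
  (exists_augmentation_hom hS _).choose_spec

instance : IsIso (augmentationHom hS).τ₃ :=
  (augmentationHom_τ₃ hS).symm ▸ inferInstanceAs (IsIso (𝟙 S.X₃))

lemma d_comp_augmentationHom_τ₁ :
    (projectiveResolution S.X₃).complex.d 2 1 ≫ (augmentationHom hS).τ₁ = 0 := by
  have := hS.mono_f
  rw [← cancel_mono S.f, Category.assoc, (augmentationHom hS).comm₁₂]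
  simp

variable {R : Type u} [CommRing R] [Linear R C] {Y : C}

variable (R Y) in
/-- The connecting homomorphism `Hom(S₁, Y) ⟶ Ext¹(S₃, Y)` of a short exact sequence `S`. -/
def extConnecting : (S.X₁ ⟶ Y) →ₗ[R] ExtObj R S.X₃ Y 1 :=
  extCocycleClass R (projectiveResolution S.X₃) Y 1 ∘ₗ
    (Linear.leftComp R Y (augmentationHom hS).τ₁).codRestrict _ fun φ =>
      show _ ≫ (augmentationHom hS).τ₁ ≫ φ = 0 by
        rw [reassoc_of% d_comp_augmentationHom_τ₁ hS, Limits.zero_comp]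

lemma exists_extension_of_extConnecting_eq_zero {φ : S.X₁ ⟶ Y} (h : extConnecting hS R Y φ = 0) :
    ∃ χ : S.X₂ ⟶ Y, S.f ≫ χ = φ := by
  obtain ⟨ψ, hψ⟩ := (extCocycleClass_eq_zero_iff _).1 h
  exact exists_extension_of_comp_eq (augmentationHom hS) (augmentation_exact _) hS hψ

lemma extPullback_extConnecting (β : S ⟶ S') (φ : S'.X₁ ⟶ Y) :
    extPullback R β.τ₃ Y 1 (extConnecting hS' R Y φ) = extConnecting hS R Y (β.τ₁ ≫ φ) := by
  have comm := ProjectiveResolution.lift_commutes_zero β.τ₃ (projectiveResolution S.X₃)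
    (projectiveResolution S'.X₃)
  obtain ⟨t, ht⟩ := exists_τ₁_sub_eq_comp (α := augmentationMap comm ≫ augmentationHom hS')
    (β := augmentationHom hS ≫ β) hS' (by
      rw [ShortComplex.comp_τ₃, ShortComplex.comp_τ₃, augmentationHom_τ₃, augmentationHom_τ₃,
        Category.comp_id, Category.id_comp])
  have d_comp_t : (projectiveResolution S.X₃).complex.d 1 0 ≫ t ≫ φ =
      (ProjectiveResolution.lift β.τ₃ _ _).f 1 ≫ (augmentationHom hS').τ₁ ≫ φ -
        (augmentationHom hS).τ₁ ≫ β.τ₁ ≫ φ := by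
    simpa using (ht =≫ φ).symm
  refine (extPullback_extCocycleClass comm _).trans (sub_eq_zero.1 ?_)
  exact (map_sub (extCocycleClass R _ Y 1) _ _).symm.trans
    ((extCocycleClass_eq_zero_iff _).2 ⟨t ≫ φ, d_comp_t⟩)

end Connecting

section IdealExt

variable {R : Type u} [CommRing R] {I J : Ideal R}

/-- The projection `R ⧸ J ⟶ R ⧸ I` for `J ≤ I`. -/
abbrev quotientProj (h : J ≤ I) : ModuleCat.of R (R ⧸ J) ⟶ ModuleCat.of R (R ⧸ I) :=
  ModuleCat.ofHom (Submodule.mapQ J I LinearMap.id h)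

lemma exists_extPullback_smul_eq_zero {M : ModuleCat.{u} R} {i n : ℕ} {a : R}
    (ha : a ∈ Module.annihilator R ((localCohomology J i).obj M))
    (x : ExtObj R (ModuleCat.of R (R ⧸ J ^ n)) M i) :
    ∃ (m : ℕ) (h : n ≤ m),
      extPullback R (quotientProj (Ideal.pow_le_pow_right h)) M i (a • x) = 0 := by
  let D := localCohomology.diagram (localCohomology.idealPowersDiagram J) i
  let ev := (evaluation (ModuleCat.{u} R) (ModuleCat.{u} R)).obj M
  let cocone := ev.mapCocone (Limits.colimit.cocone D)
  have isColimit : Limits.IsColimit cocone :=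
    Limits.isColimitOfPreserves ev (Limits.colimit.isColimit D)
  let x' : (D ⋙ ev).obj (.op (.op n)) := x
  have smul_eq_zero_in_colimit : cocone.ι.app _ (a • x') = cocone.ι.app _ (0 : (D ⋙ ev).obj _) := by
    rw [map_zero, map_smul]
    exact Module.mem_annihilator.1 ha _
  have : Limits.PreservesFilteredColimitsOfSize.{0, 0} (forget (ModuleCat.{u} R)) :=
    Limits.preservesSmallestFilteredColimits_of_preservesFilteredColimits.{u, u} _
  obtain ⟨k, f, g, hfg⟩ :=
    Limits.Concrete.isColimit_exists_of_rep_eq (D ⋙ ev) isColimit _ _ smul_eq_zero_in_colimit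
  exact ⟨k.unop.unop, leOfHom f.unop.unop, hfg.trans (map_zero ((D ⋙ ev).map g).hom)⟩

variable (I) in
/-- The short exact sequence `0 ⟶ I ⟶ R ⟶ R ⧸ I ⟶ 0`. -/
abbrev idealSequence : ShortComplex (ModuleCat.{u} R) where
  f := ModuleCat.ofHom (Submodule.subtype I)
  g := ModuleCat.ofHom (Submodule.mkQ I)
  zero := by ext x; exact (Submodule.Quotient.mk_eq_zero I).2 x.2

variable (I) in
lemma idealSequence_shortExact : (idealSequence I).ShortExact where
  exact := (ShortComplex.ShortExact.moduleCat_exact_iff_function_exact _).2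
    (LinearMap.exact_subtype_mkQ I)
  mono_f := (ModuleCat.mono_iff_injective _).2 (Submodule.subtype_injective I)
  epi_g := (ModuleCat.epi_iff_surjective _).2 (Submodule.mkQ_surjective I)

/-- The map of sequences `idealSequence` given by an inclusion of ideals. -/
abbrev idealSequenceMap (h : J ≤ I) : idealSequence J ⟶ idealSequence I where
  τ₁ := ModuleCat.ofHom (Submodule.inclusion h)
  τ₂ := 𝟙 _
  τ₃ := quotientProj h

end IdealExt

section FractionalDual

variable {R K : Type*} [CommRing R] [CommRing K] [Algebra R K]

lemma le_one_div_one_div (N : Submodule R K) : N ≤ 1 / (1 / N) :=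
  Submodule.le_div_iff.2 fun x hx f hf => mul_comm f x ▸ Submodule.le_div_iff.1 le_rfl f hf x hx

lemma one_div_one_div_one_div (N : Submodule R K) : 1 / (1 / (1 / N)) = 1 / N :=
  le_antisymm
    (Submodule.le_div_iff.2 fun f hf x hx =>
      Submodule.le_div_iff.1 le_rfl f hf x (le_one_div_one_div N hx))
    (le_one_div_one_div _)

variable [IsFractionRing R K] {N : Submodule R K}

variable (R K) in
/-- The copy of `R` inside its total ring of fractions. -/
def oneEquiv : (1 : Submodule R K) ≃ₗ[R] R :=
  (LinearEquiv.ofEq _ _ Submodule.one_eq_range).trans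
    (LinearEquiv.ofInjective (Algebra.linearMap R K) (IsFractionRing.injective R K)).symm

lemma algebraMap_oneEquiv (x : (1 : Submodule R K)) : algebraMap R K (oneEquiv R K x) = x := by
  exact LinearEquiv.ofInjective_symm_apply (f := Algebra.linearMap R K)
    (h := IsFractionRing.injective R K) _

variable (N) in
/-- The functional on `N` with values in `R` given by multiplication by an element of `(R : N)`. -/
def colonDual : (1 / N : Submodule R K) →ₗ[R] Module.Dual R N :=
  LinearMap.mk₂ R
    (fun f x => oneEquiv R K ⟨f * x, Submodule.mem_div_iff_forall_mul_mem.1 f.2 x x.2⟩)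
    (fun f g x => by rw [← map_add]; congr 2; exact add_mul _ _ _)
    (fun r f x => by rw [← map_smul]; congr 2; exact smul_mul_assoc _ _ _)
    (fun f x y => by rw [← map_add]; congr 2; exact mul_add _ _ _)
    (fun r f x => by rw [← map_smul]; congr 2; exact mul_smul_comm _ _ _)

lemma algebraMap_colonDual (f : (1 / N : Submodule R K)) (x : N) :
    algebraMap R K (colonDual N f x) = f * x :=
  algebraMap_oneEquiv _

lemma algebraMap_dual_mul_comm (l : Module.Dual R N) (x y : N) :
    algebraMap R K (l x) * y = algebraMap R K (l y) * x := by
  obtain ⟨⟨b, s⟩, hs⟩ := IsLocalization.surj (nonZeroDivisors R) (x : K)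
  obtain ⟨⟨c, t⟩, ht⟩ := IsLocalization.surj (nonZeroDivisors R) (y : K)
  have smul_eq : (b * t : R) • y = (c * s : R) • x := by
    apply Subtype.ext
    simp only [Submodule.coe_smul, Algebra.smul_def, map_mul] at *
    linear_combination (algebraMap R K s * x) * ht - (algebraMap R K t * y) * hs
  have map_eq := congrArg (algebraMap R K ∘ l) smul_eq
  simp only [Function.comp_apply, map_smul, smul_eq_mul, map_mul] at map_eq hs ht
  apply (IsLocalization.map_units K (s * t)).mul_left_cancel
  simp only [Submonoid.coe_mul, map_mul]
  linear_combination -map_eq + algebraMap R K (l x) * algebraMap R K s * ht -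
    algebraMap R K (l y) * algebraMap R K t * hs

lemma colonDual_bijective (hN : ∃ u ∈ N, IsUnit u) : Function.Bijective (colonDual N) := by
  obtain ⟨u, huN, hu⟩ := hN
  refine ⟨fun f g hfg => Subtype.ext (hu.mul_right_cancel ?_), fun l => ?_⟩
  · rw [← algebraMap_colonDual f ⟨u, huN⟩, hfg, algebraMap_colonDual]
  obtain ⟨v, huv⟩ := hu.exists_right_inv
  have value (x : N) : algebraMap R K (l ⟨u, huN⟩) * v * x = algebraMap R K (l x) := by
    linear_combination v * algebraMap_dual_mul_comm l ⟨u, huN⟩ x + algebraMap R K (l x) * huv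
  refine ⟨⟨algebraMap R K (l ⟨u, huN⟩) * v, Submodule.mem_div_iff_forall_mul_mem.2
    fun x hx => Submodule.mem_one.2 ⟨l ⟨x, hx⟩, (value ⟨x, hx⟩).symm⟩⟩, ?_⟩
  ext x
  exact IsFractionRing.injective R K ((algebraMap_colonDual _ x).trans (value x))

lemma isReflexive_of_one_div_one_div_eq (hN : ∃ u ∈ N, IsUnit u)
    (hN' : ∃ u ∈ (1 / N : Submodule R K), IsUnit u) (h : 1 / (1 / N) = N) :
    Module.IsReflexive R N := by
  let e := LinearEquiv.ofBijective (colonDual N) (colonDual_bijective hN)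
  let e' := LinearEquiv.ofBijective (colonDual (1 / N)) (colonDual_bijective hN')
  have eval_eq : Module.Dual.eval R N =
      ((LinearEquiv.ofEq _ _ h).symm.trans (e'.trans e.dualMap.symm)).toLinearMap := by
    ext x l
    obtain ⟨f, rfl⟩ := e.surjective l
    have eval_l : algebraMap R K (e f x) = f * x := algebraMap_colonDual f x
    have eval_f : algebraMap R K (e' ((LinearEquiv.ofEq _ _ h).symm x) f) = x * f :=
      algebraMap_colonDual _ f
    simpa [LinearEquiv.dualMap_symm] using IsFractionRing.injective R K
      (eval_l.trans ((mul_comm _ _).trans eval_f.symm))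
  exact ⟨eval_eq ▸ LinearEquiv.bijective _⟩

lemma isReflexive_one_div_coeSubmodule {I : Ideal R}
    (hI : ∃ s ∈ I, s ∈ nonZeroDivisors R) :
    Module.IsReflexive R (1 / IsLocalization.coeSubmodule K I : Submodule R K) := by
  obtain ⟨s, hsI, hs⟩ := hI
  refine isReflexive_of_one_div_one_div_eq ⟨1, ?_, isUnit_one⟩
    ⟨algebraMap R K s, le_one_div_one_div _ ⟨s, hsI, rfl⟩,
      IsLocalization.map_units K (⟨s, hs⟩ : nonZeroDivisors R)⟩ (one_div_one_div_one_div _)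
  refine Submodule.mem_div_iff_forall_mul_mem.2 ?_
  rintro _ ⟨x, -, rfl⟩
  exact Submodule.mem_one.2 ⟨x, (one_mul _).symm⟩

end FractionalDual

section ColonExt

variable {R : Type u} [CommRing R] {K : Type*} [CommRing K] [Algebra R K] {I J : Ideal R}

lemma one_div_coeSubmodule_mono (h : J ≤ I) :
    1 / IsLocalization.coeSubmodule K I ≤ 1 / IsLocalization.coeSubmodule K J :=
  Submodule.le_div_iff.2 fun f hf x hx =>
    Submodule.le_div_iff.1 le_rfl f hf x (IsLocalization.coeSubmodule_mono K h hx)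

variable [IsFractionRing R K]

variable (K I) in
/-- For `f ∈ (R : I)`, the class in `Ext¹(R ⧸ I, R)` of multiplication by `f` as a map `I ⟶ R`;
this is the embedding of `(R : I) / R` into `Ext¹(R ⧸ I, R)`. -/
def colonExtClass : (1 / IsLocalization.coeSubmodule K I : Submodule R K) →ₗ[R]
    ExtObj R (ModuleCat.of R (R ⧸ I)) (ModuleCat.of R R) 1 :=
  extConnecting (idealSequence_shortExact I) R (ModuleCat.of R R) ∘ₗ
    ModuleCat.homLinearEquiv.symm.toLinearMap ∘ₗ
      ((Algebra.linearMap R K).submoduleMap I).dualMap ∘ₗ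
        colonDual (IsLocalization.coeSubmodule K I)

lemma mem_one_of_colonExtClass_eq_zero (hI : ∃ s ∈ I, s ∈ nonZeroDivisors R)
    {f : (1 / IsLocalization.coeSubmodule K I : Submodule R K)} (hf : colonExtClass K I f = 0) :
    (f : K) ∈ (1 : Submodule R K) := by
  obtain ⟨s, hsI, hs⟩ := hI
  obtain ⟨χ, hχ⟩ := exists_extension_of_extConnecting_eq_zero _ hf
  have χ_s : algebraMap R K (χ.hom s) = f * algebraMap R K s :=
    (congrArg (algebraMap R K) (ConcreteCategory.congr_hom hχ ⟨s, hsI⟩)).trans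
      (algebraMap_colonDual f _)
  have χ_s' : χ.hom s = s * χ.hom (1 : R) := by
    rw [← smul_eq_mul, ← map_smul, smul_eq_mul, mul_one]
  refine Submodule.mem_one.2 ⟨χ.hom (1 : R),
    (IsLocalization.map_units K (⟨s, hs⟩ : nonZeroDivisors R)).mul_right_cancel ?_⟩
  rw [← χ_s, χ_s', map_mul, mul_comm]

lemma extPullback_colonExtClass (h : J ≤ I)
    (f : (1 / IsLocalization.coeSubmodule K I : Submodule R K)) :
    extPullback R (quotientProj h) (ModuleCat.of R R) 1 (colonExtClass K I f) =
      colonExtClass K J ⟨f, one_div_coeSubmodule_mono h f.2⟩ := by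
  refine (extPullback_extConnecting (idealSequence_shortExact J) (idealSequence_shortExact I)
    (idealSequenceMap h) _).trans (congrArg (extConnecting _ R _) ?_)
  ext x
  apply IsFractionRing.injective R K
  exact (algebraMap_colonDual f _).trans
    (algebraMap_colonDual (N := IsLocalization.coeSubmodule K J)
      ⟨f, one_div_coeSubmodule_mono h f.2⟩ ((Algebra.linearMap R K).submoduleMap J x)).symm

lemma smul_mem_one_of_mem_annihilator_localCohomology (hJ : ∃ s ∈ J, s ∈ nonZeroDivisors R)
    {a : R} (ha : a ∈ Module.annihilator R ((localCohomology J 1).obj (ModuleCat.of R R)))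
    {n : ℕ} {f : K} (hf : f ∈ 1 / IsLocalization.coeSubmodule K (J ^ n)) :
    a • f ∈ (1 : Submodule R K) := by
  obtain ⟨s, hsJ, hs⟩ := hJ
  obtain ⟨m, hnm, hm⟩ := exists_extPullback_smul_eq_zero ha (colonExtClass K (J ^ n) ⟨f, hf⟩)
  rw [← map_smul, extPullback_colonExtClass] at hm
  exact mem_one_of_colonExtClass_eq_zero ⟨s ^ m, Ideal.pow_mem_pow hsJ m, pow_mem hs m⟩ hm

lemma span_singleton_eq_top_of_ne_zero [IsLocalRing R] {E : Type*} [AddCommGroup E] [Module R E]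
    (hE : maximalIdeal R ≤ Module.annihilator R E) {e : E} (he : Submodule.span R {e} = ⊤)
    {x : E} (hx : x ≠ 0) : Submodule.span R {x} = ⊤ := by
  obtain ⟨r, rfl⟩ := Submodule.mem_span_singleton.1
    (he ▸ Submodule.mem_top : x ∈ Submodule.span R {e})
  have hr : IsUnit r := by
    by_contra hr
    exact hx (Module.mem_annihilator.1 (hE hr) e)
  rw [Submodule.span_singleton_smul_eq hr, he]

lemma maximalIdeal_le_annihilator_ext [IsLocalRing R] {Y : ModuleCat.{u} R} {n : ℕ} :
    maximalIdeal R ≤ Module.annihilator R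
      (ExtObj R (ModuleCat.of R (R ⧸ maximalIdeal R)) Y n) := by
  refine fun a ha => Module.mem_annihilator.2 (smul_ext_eq_zero ?_)
  apply ModuleCat.hom_ext
  refine LinearMap.ext fun x => ?_
  obtain ⟨x, rfl⟩ := Ideal.Quotient.mk_surjective x
  exact Ideal.Quotient.eq_zero_iff_mem.2 (Ideal.mul_mem_right x _ ha)

lemma eq_one_div_of_lt_of_le [IsLocalRing R] (hm : ∃ s ∈ maximalIdeal R, s ∈ nonZeroDivisors R)
    (hExt : ∃ e : ExtObj R (ModuleCat.of R (R ⧸ maximalIdeal R)) (ModuleCat.of R R) 1,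
      Submodule.span R {e} = ⊤) {N : Submodule R K} (hlt : 1 < N)
    (hle : N ≤ 1 / IsLocalization.coeSubmodule K (maximalIdeal R)) :
    N = 1 / IsLocalization.coeSubmodule K (maximalIdeal R) := by
  obtain ⟨e, he⟩ := hExt
  obtain ⟨f, hfN, hf⟩ := SetLike.exists_of_lt hlt
  let f' : (1 / IsLocalization.coeSubmodule K (maximalIdeal R) : Submodule R K) := ⟨f, hle hfN⟩
  have class_f_ne_zero : colonExtClass K (maximalIdeal R) f' ≠ 0 :=
    fun h => hf (mem_one_of_colonExtClass_eq_zero hm h)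
  refine hle.antisymm fun g hg => ?_
  let g' : (1 / IsLocalization.coeSubmodule K (maximalIdeal R) : Submodule R K) := ⟨g, hg⟩
  obtain ⟨r, hr⟩ := Submodule.mem_span_singleton.1
    ((span_singleton_eq_top_of_ne_zero maximalIdeal_le_annihilator_ext he class_f_ne_zero).symm ▸
      Submodule.mem_top : colonExtClass K (maximalIdeal R) g' ∈ _)
  have sub_mem_one : g - r • f ∈ (1 : Submodule R K) :=
    mem_one_of_colonExtClass_eq_zero (f := g' - r • f') hm
      (by rw [map_sub, map_smul, hr, sub_self])
  exact (Submodule.sub_mem_iff_left N (N.smul_mem r hfN)).1 (hlt.le sub_mem_one)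

end ColonExt

section PuncturedSpectrum

lemma preValuationRing_of_isPrincipal_maximalIdeal {A : Type*} [CommRing A] [IsLocalRing A]
    [IsNoetherianRing A] (h : (maximalIdeal A).IsPrincipal) : PreValuationRing A := by
  obtain ⟨t, ht⟩ := h
  have dvd_iff_not_isUnit (x : A) : t ∣ x ↔ ¬ IsUnit x := by
    rw [← Ideal.mem_span_singleton, ← mem_nonunits_iff, ← mem_maximalIdeal, ht]
  have exists_eq_pow_mul_unit {a : A} (ha : a ≠ 0) : ∃ n u, IsUnit u ∧ a = t ^ n * u := by
    have finite : FiniteMultiplicity t a := by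
      by_contra infinite
      refine ha ((Submodule.mem_bot A).1 ?_)
      rw [← Ideal.iInf_pow_eq_bot_of_isLocalRing _ (maximalIdeal.isMaximal A).ne_top,
        Submodule.mem_iInf]
      intro n
      rw [ht, Ideal.submodule_span_eq, Ideal.span_singleton_pow, Ideal.mem_span_singleton]
      exact FiniteMultiplicity.not_iff_forall.1 infinite n
    obtain ⟨u, hau, hu⟩ := finite.exists_eq_pow_mul_and_not_dvd
    exact ⟨_, u, not_not.1 (mt (dvd_iff_not_isUnit u).2 hu), hau⟩
  refine PreValuationRing.iff_dvd_total.2 ⟨fun a b => ?_⟩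
  rcases eq_or_ne a 0 with rfl | ha
  · exact .inr (dvd_zero b)
  rcases eq_or_ne b 0 with rfl | hb
  · exact .inl (dvd_zero a)
  obtain ⟨n, u, hu, rfl⟩ := exists_eq_pow_mul_unit ha
  obtain ⟨m, v, hv, rfl⟩ := exists_eq_pow_mul_unit hb
  simp only [hu.mul_right_dvd, hv.mul_right_dvd, hu.dvd_mul_right, hv.dvd_mul_right]
  exact (le_total n m).imp (pow_dvd_pow t) (pow_dvd_pow t)

lemma IsRegularLocal.isPrincipal_maximalIdeal {A : Type} [CommRing A] [IsLocalRing A]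
    (h : IsRegularLocal A) (hdim : ringKrullDim A ≤ 1) : (maximalIdeal A).IsPrincipal := by
  obtain ⟨-, s, hs, hcard⟩ := h
  have card_le_one : s.card ≤ 1 := by
    have card_le_one' : ((s.card : ℕ∞) : WithBot ℕ∞) ≤ (1 : ℕ∞) := hcard.trans_le hdim
    exact_mod_cast WithBot.coe_le_coe.1 card_le_one'
  rw [← hs]
  rcases Nat.le_one_iff_eq_zero_or_eq_one.1 card_le_one with h0 | h1
  · rw [Finset.card_eq_zero.1 h0, Finset.coe_empty, Ideal.span_empty]
    exact bot_isPrincipal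
  · obtain ⟨t, rfl⟩ := Finset.card_eq_one.1 h1
    rw [Finset.coe_singleton]
    exact ⟨t, rfl⟩

lemma ringKrullDim_localization_lt {R : Type*} [CommRing R] [IsLocalRing R] [IsNoetherianRing R]
    {p : Ideal R} [p.IsPrime] (hp : p ≠ maximalIdeal R) :
    ringKrullDim (Localization.AtPrime p) < ringKrullDim R := by
  have lt : p < maximalIdeal R := (le_maximalIdeal Ideal.IsPrime.ne_top').lt_of_ne hp
  rw [IsLocalization.AtPrime.ringKrullDim_eq_height p, ← maximalIdeal_height_eq_ringKrullDim]
  exact_mod_cast Ideal.height_strict_mono_of_isPrime lt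

lemma SerreR1.preValuationRing {R : Type} [CommRing R] [IsLocalRing R] [IsNoetherianRing R]
    (hR1 : SerreR1 R) (hdim : ringKrullDim R ≤ 2) (p : Ideal R) [p.IsPrime]
    (hp : p ≠ maximalIdeal R) : PreValuationRing (Localization.AtPrime p) := by
  have hdim_p : ringKrullDim (Localization.AtPrime p) ≤ 1 :=
    Order.le_of_lt_succ ((ringKrullDim_localization_lt hp).trans_le hdim)
  exact preValuationRing_of_isPrincipal_maximalIdeal
    ((hR1 p hdim_p).isPrincipal_maximalIdeal hdim_p)

end PuncturedSpectrum

section IntegralElements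

variable {R : Type*} [CommRing R] {K : Type*} [CommRing K] [Algebra R K]

lemma pow_smul_aeval_mem_one {f : K} {b : R} (hf : b • f ∈ (1 : Submodule R K)) {n : ℕ}
    {q : Polynomial R} (hq : q.natDegree ≤ n) :
    b ^ n • Polynomial.aeval f q ∈ (1 : Submodule R K) := by
  rw [Polynomial.aeval_eq_sum_range, Finset.smul_sum]
  refine Submodule.sum_mem _ fun i hi => ?_
  have hin : i ≤ n := (Nat.lt_succ_iff.1 (Finset.mem_range.1 hi)).trans hq
  have pow_mem : (b • f) ^ i ∈ (1 : Submodule R K) := by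
    simpa using Submodule.pow_mem_pow _ hf i
  rw [smul_comm, ← Nat.sub_add_cancel hin, pow_add, mul_smul, ← smul_pow]
  exact Submodule.smul_mem _ _ (Submodule.smul_mem _ _ pow_mem)

lemma exists_pow_smul_mem_one_of_isIntegral {f : K} (hf : IsIntegral R f) {b u : R}
    (h : b • f = algebraMap R K u) : ∃ n, u ^ n • f ∈ (1 : Submodule R K) := by
  obtain ⟨p, hp, hpf⟩ := hf
  refine ⟨p.natDegree, ?_⟩
  have smul_mem : b • f ∈ (1 : Submodule R K) := h ▸ Submodule.algebraMap_mem u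
  -- Reducing `X ^ (d + 1)` modulo `p`, `d = deg p`, shows `u ^ d f = b ^ d f ^ (d + 1) ∈ R`.
  have aeval_mem := pow_smul_aeval_mem_one smul_mem
    (Polynomial.natDegree_modByMonic_le (Polynomial.X ^ (p.natDegree + 1)) hp)
  rwa [Polynomial.aeval_modByMonic_eq_self_of_root hpf, map_pow, Polynomial.aeval_X, pow_succ,
    ← smul_mul_assoc, ← smul_pow, h, ← map_pow, ← Algebra.smul_def] at aeval_mem

lemma exists_notMem_mul_eq_mul_of_dvd {p : Ideal R} [p.IsPrime] {a b : R}
    (h : algebraMap R (Localization.AtPrime p) a ∣ algebraMap R (Localization.AtPrime p) b) :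
    ∃ u ∉ p, ∃ c, u * b = c * a := by
  obtain ⟨z, hz⟩ := h
  obtain ⟨⟨c, u⟩, hc⟩ := IsLocalization.surj p.primeCompl z
  have eq : algebraMap R (Localization.AtPrime p) (u * b) = algebraMap R _ (c * a) := by
    rw [map_mul, map_mul, hz, ← hc]
    ring
  obtain ⟨v, hv⟩ := (IsLocalization.eq_iff_exists p.primeCompl _).1 eq
  exact ⟨v * u, (v * u).2, v * c, by linear_combination hv⟩

variable [IsFractionRing R K]

lemma not_colon_le_of_isIntegral {f : K} (hf : IsIntegral R f) (p : Ideal R) [p.IsPrime]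
    [PreValuationRing (Localization.AtPrime p)] :
    ¬ (1 : Submodule R K).colon {f} ≤ p := by
  intro hle
  obtain ⟨⟨a, s⟩, has⟩ := IsLocalization.surj (nonZeroDivisors R) f
  have hs : IsUnit (algebraMap R K s) := IsLocalization.map_units K s
  rcases ValuationRing.dvd_total (algebraMap R (Localization.AtPrime p) s) (algebraMap R _ a)
    with hdvd | hdvd
  all_goals
    obtain ⟨u, hu, c, hc⟩ := exists_notMem_mul_eq_mul_of_dvd hdvd
    have hcK := congrArg (algebraMap R K) hc
    rw [map_mul, map_mul, ← has] at hcK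
  · have smul_eq : u • f = algebraMap R K c := by
      rw [Algebra.smul_def]
      exact hs.mul_right_cancel (by linear_combination hcK)
    exact hu (hle (Submodule.mem_colon_singleton.2 (smul_eq ▸ Submodule.algebraMap_mem c)))
  · have smul_eq : c • f = algebraMap R K u := by
      rw [Algebra.smul_def]
      exact hs.mul_right_cancel (by linear_combination -hcK)
    obtain ⟨n, hn⟩ := exists_pow_smul_mem_one_of_isIntegral hf smul_eq
    exact hu (Ideal.IsPrime.mem_of_pow_mem ‹_› n (hle (Submodule.mem_colon_singleton.2 hn)))

lemma exists_mem_one_div_maximalIdeal_pow [IsLocalRing R] (hfg : (maximalIdeal R).FG)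
    (hval : ∀ (p : Ideal R) [p.IsPrime], p ≠ maximalIdeal R →
      PreValuationRing (Localization.AtPrime p)) {f : K} (hf : IsIntegral R f) :
    ∃ n, f ∈ 1 / IsLocalization.coeSubmodule K (maximalIdeal R ^ n) := by
  have le_radical : maximalIdeal R ≤ ((1 : Submodule R K).colon {f}).radical := by
    rw [Ideal.radical_eq_sInf]
    refine le_sInf fun p ⟨hle, hp⟩ => ?_
    by_contra hne
    have := hval p (fun h => hne h.ge)
    exact not_colon_le_of_isIntegral hf p hle
  obtain ⟨n, hn⟩ := Ideal.exists_pow_le_of_le_radical_of_fg le_radical hfg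
  refine ⟨n, Submodule.mem_div_iff_forall_mul_mem.2 ?_⟩
  rintro _ ⟨x, hx, rfl⟩
  rw [Algebra.linearMap_apply, mul_comm, ← Algebra.smul_def]
  exact Submodule.mem_colon_singleton.1 (hn hx)

lemma exists_mem_nonZeroDivisors_of_one_ne_top [IsLocalRing R]
    (h : (1 : Submodule R K) ≠ ⊤) : ∃ s ∈ maximalIdeal R, s ∈ nonZeroDivisors R := by
  contrapose! h
  refine eq_top_iff.2 fun f _ => ?_
  obtain ⟨⟨a, s⟩, has⟩ := IsLocalization.surj (nonZeroDivisors R) f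
  obtain ⟨t, ht⟩ := (not_not.1 (mt (h s) (not_not.2 s.2)) : IsUnit (s : R)).exists_right_inv
  refine Submodule.mem_one.2 ⟨a * t, ?_⟩
  have htK := congrArg (algebraMap R K) ht
  simp only [map_mul, map_one] at htK ⊢
  linear_combination -algebraMap R K t * has + f * htK

end IntegralElements

theorem stmt7_general (R : Type u) [CommRing R] [IsLocalRing R] (K : Type v) [CommRing K]
    [Algebra R K] [IsFractionRing R K] (hfg : (maximalIdeal R).FG)
    (hval : ∀ (p : Ideal R) [p.IsPrime], p ≠ maximalIdeal R →
      PreValuationRing (Localization.AtPrime p))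
    (hqb : maximalIdeal R ≤ Module.annihilator R
      ((localCohomology (maximalIdeal R) 1).obj (ModuleCat.of R R)))
    (hbass : ∃ e : ExtObj R (ModuleCat.of R (R ⧸ maximalIdeal R)) (ModuleCat.of R R) 1,
      Submodule.span R {e} = ⊤) :
    Module.IsReflexive R (integralClosure R K) := by
  set N := Subalgebra.toSubmodule (integralClosure R K)
  change Module.IsReflexive R N
  have one_le : 1 ≤ N := Submodule.one_le.2 (one_mem (integralClosure R K))
  rcases one_le.eq_or_lt with one_eq | one_lt
  · rw [← one_eq]
    exact Module.equiv (oneEquiv R K).symm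
  have hm := exists_mem_nonZeroDivisors_of_one_ne_top one_lt.ne_top
  have le_colon : N ≤ 1 / IsLocalization.coeSubmodule K (maximalIdeal R) := by
    refine Submodule.le_div_iff.2 fun f hf => ?_
    rintro _ ⟨a, ha, rfl⟩
    obtain ⟨n, hn⟩ := exists_mem_one_div_maximalIdeal_pow hfg hval hf
    rw [Algebra.linearMap_apply, mul_comm, ← Algebra.smul_def]
    exact smul_mem_one_of_mem_annihilator_localCohomology hm (hqb ha) hn
  rw [eq_one_div_of_lt_of_le hm hbass one_lt le_colon]
  exact isReflexive_one_div_coeSubmodule hm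

-- STATEMENT 7
theorem stmt7 (R : Type) [CommRing R] [IsLocalRing R] [IsNoetherianRing R]
    (hau : AnalyticallyUnramified R) (hdim : ringKrullDim R = 2)
    (hR1 : SerreR1 R)
    (hqb : maximalIdeal R ≤ Module.annihilator R (localCohMod R 1 R))
    (hbass : ∃ e : ExtMod R (ResidueField R) R 1, Submodule.span R {e} = ⊤) :
    Module.IsReflexive R (IntClosure R) :=
  stmt7_general R (FractionRing R) (IsNoetherian.noetherian _) (hR1.preValuationRing hdim.le)
    hqb hbass
end
end
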